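/- arXiv:1706.06331 — 3 statements merged into one kernel-verified Lean document; each statement's English description precedes it below -/
import Mathlib

section
/- Let h̃₀(x,ξ) := −Σ_{η∈ℤ^d} ã_η(x) cosh(η·ξ) − V₀(x), where ã and V₀ satisfy: each ã_η smooth with ã_η(x) ≤ 0 for η ≠ 0, ã_η(x) = ã_{−η}(x), span{η : ã_η(x) < 0} = ℝ^d, Σ_η e^{c|η|} sup_{x∈K}|∂_x^β ã_η(x)| < ∞ for all c > 0, compact K, multi-index β; and V₀ ∈ C^∞(ℝ^d), V₀ ≥ 0, V₀(x) = 0 exactly when x = 0, with nondegenerate minimum at 0. Let ℓ be the Finsler function of h̃₀ at energy E = 0 on ℝ^d \ {0} (defined by ℓ(x,v) = ξ_{h̃₀}(x, λ(x,v)v)·v with ξ_{h̃₀}(x,·) = (∇_ξ h̃₀(x,·))^{-1} and λ(x,v) > 0 the unique number with h̃₀(x, ξ_{h̃₀}(x, λ(x,v)v)) = 0), extended by ℓ(0,·) := 0, and let d_ℓ(x,y) := inf ∫_0^1 ℓ(γ(t), γ̇(t)) dt over all C² curves γ : [0,1] → ℝ^d with γ̇(t) ≠ 0 for all t, γ(0)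 = x, γ(1) = y. Then d_ℓ is locally Lipschitz: for every compact K ⊂ ℝ^d there is C > 0 such that d_ℓ(x,y) ≤ C |x − y| for all x, y ∈ K. -/
open scoped RealInnerProductSpace Classical
noncomputable section

/-- `ℝ^d` as a Euclidean space. -/
abbrev Ed (d : ℕ) := EuclideanSpace ℝ (Fin d)

/-- The lattice vector `η ∈ ℤ^d` regarded as a vector of `ℝ^d`. -/
def zv {d : ℕ} (η : Fin d → ℤ) : Ed d :=
  (EuclideanSpace.equiv (Fin d) ℝ).symm (fun i => (η i : ℝ))


theorem aux_bdd {F : Type*} [NormedAddCommGroup F] [NormedSpace ℝ F] (γ : ℝ → F)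
    (h : ContDiffOn ℝ 2 γ (Set.Icc 0 1)) (hd : ∀ t ∈ Set.Icc (0:ℝ) 1, deriv γ t ≠ 0) :
    ∃ M : ℝ, ∀ t ∈ Set.Icc (0:ℝ) 1, ‖deriv γ t‖ ≤ M := by
  have hc := h.continuousOn_derivWithin (uniqueDiffOn_Icc zero_lt_one) (by norm_num)
  obtain ⟨M, hM⟩ := isCompact_Icc.exists_bound_of_continuousOn hc
  refine ⟨M, fun t ht => ?_⟩
  have hda : DifferentiableAt ℝ γ t := by
    by_contra hh
    exact hd t ht (deriv_zero_of_not_differentiableAt hh)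
  rw [← hda.derivWithin (uniqueDiffOn_Icc zero_lt_one t ht)]
  exact hM t ht

theorem aux_grad {F : Type*} [NormedAddCommGroup F] [InnerProductSpace ℝ F] [CompleteSpace F]
    (f : F → ℝ) (ξ : F) (hm : ∀ t : ℝ, 1 ≤ t → f ξ ≤ f (t • ξ)) :
    0 ≤ inner ℝ (gradient f ξ) ξ := by
  by_cases hf : DifferentiableAt ℝ f ξ
  · have h1 : HasDerivAt (fun t : ℝ => t • ξ) ξ 1 := by
      simpa using (hasDerivAt_id (1:ℝ)).smul_const ξ
    have h2 : HasFDerivAt f (InnerProductSpace.toDual ℝ F (gradient f ξ)) ((1:ℝ) • ξ) := by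
      rw [one_smul]; exact hf.hasGradientAt.hasFDerivAt
    have h3 := h2.comp_hasDerivAt (1:ℝ) h1
    rw [InnerProductSpace.toDual_apply_apply] at h3
    have h4 := h3.hasDerivWithinAt (s := Set.Ioi 1)
    rw [hasDerivWithinAt_iff_tendsto_slope' (by simp)] at h4
    refine ge_of_tendsto h4 ?_
    filter_upwards [self_mem_nhdsWithin] with t ht
    have ht' : (1:ℝ) < t := ht
    have := hm t ht'.le
    rw [slope_def_field]
    apply div_nonneg
    · simpa using this
    · linarith
  · have : gradient f ξ = 0 := by
      unfold gradient
      rw [fderiv_zero_of_not_differentiableAt hf]; simp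
    simp [this]

theorem aux_cosh (t : ℝ) : t ^ 2 / 2 ≤ Real.cosh t - 1 := by
  have h := Real.cosh_two_mul (t/2)
  have h2 := Real.cosh_sq (t/2)
  rw [show 2 * (t/2) = t by ring] at h
  have h3 : (t/2)^2 ≤ Real.sinh (t/2) ^ 2 := by
    rw [sq_le_sq, Real.abs_sinh]
    exact Real.self_le_sinh_iff.2 (abs_nonneg _)
  nlinarith

/-- Theorem 1.5, local Lipschitz continuity: the Finsler distance `d_ℓ` induced by the
one-well Hamilton function `h̃₀(x,ξ) = -Σ_η ã_η(x) cosh(η·ξ) - V₀(x)` at energy `0`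
satisfies `d_ℓ(x,y) ≤ C |x-y|` locally uniformly in `x, y`. -/
theorem stmt13 (d : ℕ) (a : (Fin d → ℤ) → Ed d → ℝ) (V₀ : Ed d → ℝ)
    (hsm : ∀ η : Fin d → ℤ, ContDiff ℝ (⊤ : ℕ∞) (a η))
    (hneg : ∀ η : Fin d → ℤ, η ≠ 0 → ∀ x : Ed d, a η x ≤ 0)
    (heven : ∀ (η : Fin d → ℤ) (x : Ed d), a η x = a (-η) x)
    (hzero : ∀ x : Ed d, HasSum (fun η : Fin d → ℤ => a η x) 0)
    (hspan : ∀ x : Ed d,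
      Submodule.span ℝ {w : Ed d | ∃ η : Fin d → ℤ, a η x < 0 ∧ w = zv η} = ⊤)
    (hdecay : ∀ c : ℝ, 0 < c → ∀ K : Set (Ed d), IsCompact K → ∀ n : ℕ,
      ∃ M : (Fin d → ℤ) → ℝ,
        (∀ η : Fin d → ℤ, ∀ x ∈ K, ‖iteratedFDeriv ℝ n (a η) x‖ ≤ M η) ∧
        Summable (fun η : Fin d → ℤ => Real.exp (c * ‖zv η‖) * M η))
    (hVsm : ContDiff ℝ (⊤ : ℕ∞) V₀)
    (hVpos : ∀ x : Ed d, 0 ≤ V₀ x)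
    (hVzero : ∀ x : Ed d, V₀ x = 0 ↔ x = 0)
    (hVnd : ∀ v : Ed d, v ≠ 0 → 0 < iteratedFDeriv ℝ 2 V₀ 0 ![v, v])
    (h0 : Ed d → Ed d → ℝ)
    (hh0 : ∀ x ξ : Ed d,
      h0 x ξ = -(∑' η : Fin d → ℤ, a η x * Real.cosh ⟪zv η, ξ⟫) - V₀ x)
    (ξh : Ed d → Ed d → Ed d)
    (hξh1 : ∀ x v : Ed d, gradient (h0 x) (ξh x v) = v)
    (hξh2 : ∀ x ξ : Ed d, ξh x (gradient (h0 x) ξ) = ξ)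
    (lam : Ed d → Ed d → ℝ)
    (hlam : ∀ x : Ed d, x ≠ 0 → ∀ v : Ed d, v ≠ 0 →
      0 < lam x v ∧ h0 x (ξh x (lam x v • v)) = 0)
    (ℓ : Ed d → Ed d → ℝ)
    (hℓ : ∀ x v : Ed d,
      ℓ x v = if x = 0 ∨ v = 0 then 0 else ⟪ξh x (lam x v • v), v⟫)
    (dl : Ed d → Ed d → ℝ)
    (hdl : ∀ x y : Ed d, dl x y = sInf {L : ℝ | ∃ γ : ℝ → Ed d,
      ContDiffOn ℝ 2 γ (Set.Icc 0 1) ∧ γ 0 = x ∧ γ 1 = y ∧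
      (∀ t ∈ Set.Icc (0:ℝ) 1, deriv γ t ≠ 0) ∧
      L = ∫ t in (0:ℝ)..1, ℓ (γ t) (deriv γ t)}) :
    ∀ K : Set (Ed d), IsCompact K →
      ∃ C : ℝ, 0 < C ∧ ∀ x ∈ K, ∀ y ∈ K, dl x y ≤ C * ‖x - y‖ := by
  -- summability
  have hsum : ∀ x ξ : Ed d, Summable (fun η : Fin d → ℤ => a η x * Real.cosh ⟪zv η, ξ⟫) := by
    intro x ξ
    obtain ⟨M, hM, hMs⟩ := hdecay (‖ξ‖ + 1) (by positivity) {x} isCompact_singleton 0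
    refine Summable.of_norm_bounded hMs (fun η => ?_)
    have h1 := hM η x rfl
    rw [norm_iteratedFDeriv_zero] at h1
    rw [norm_mul, mul_comm]
    refine mul_le_mul ?_ h1 (norm_nonneg _) (Real.exp_pos _).le
    rw [Real.norm_eq_abs, abs_of_pos (Real.cosh_pos _), ← Real.cosh_abs]
    have h2 : Real.cosh |⟪zv η, ξ⟫| ≤ Real.exp |⟪zv η, ξ⟫| := by
      rw [← Real.cosh_add_sinh]
      have := Real.sinh_nonneg_iff.2 (abs_nonneg ⟪zv η, ξ⟫)
      linarith
    refine h2.trans (Real.exp_le_exp.2 ?_)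
    have := abs_real_inner_le_norm (zv η) ξ
    nlinarith [norm_nonneg (zv η), norm_nonneg ξ]
  have hzv0 : zv (0 : Fin d → ℤ) = 0 := by
    ext i; simp [zv]
  have hmono : ∀ x ξ : Ed d, ∀ t : ℝ, 1 ≤ t → h0 x ξ ≤ h0 x (t • ξ) := by
    intro x ξ t ht
    rw [hh0, hh0]
    have : (∑' η : Fin d → ℤ, a η x * Real.cosh ⟪zv η, t • ξ⟫) ≤
        ∑' η : Fin d → ℤ, a η x * Real.cosh ⟪zv η, ξ⟫ := by
      refine Summable.tsum_le_tsum (fun η => ?_) (hsum x _) (hsum x _)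
      by_cases hη : η = 0
      · subst hη; simp [hzv0]
      · refine mul_le_mul_of_nonpos_left ?_ (hneg η hη x)
        rw [Real.cosh_le_cosh, inner_smul_right, abs_mul]
        have : 1 ≤ |t| := ht.trans (le_abs_self t)
        nlinarith [abs_nonneg ⟪zv η, ξ⟫]
    linarith
  have hterm : ∀ x ξ : Ed d, h0 x ξ = 0 → ∀ η : Fin d → ℤ,
      (- a η x) * (Real.cosh ⟪zv η, ξ⟫ - 1) ≤ V₀ x := by
    intro x ξ h η
    have h1 : HasSum (fun η : Fin d → ℤ => (- a η x) * (Real.cosh ⟪zv η, ξ⟫ - 1)) (V₀ x) := by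
      have h2 := (hzero x).sub (hsum x ξ).hasSum
      rw [hh0] at h
      have h3 : (0 - ∑' η : Fin d → ℤ, a η x * Real.cosh ⟪zv η, ξ⟫) = V₀ x := by linarith
      rw [h3] at h2
      refine h2.congr_fun ?_
      intro η
      ring
    refine le_hasSum h1 η (fun η' _ => ?_)
    by_cases hη : η' = 0
    · subst hη; simp [hzv0]
    · have := hneg η' hη x
      have := Real.one_le_cosh ⟪zv η', ξ⟫
      apply mul_nonneg <;> linarith
  have hVc : Continuous V₀ := hVsm.continuous
  have hloc : ∀ x₀ w : Ed d, ∃ C : ℝ, ∀ᶠ x in nhds x₀, ∀ ξ : Ed d, h0 x ξ = 0 → |⟪w, ξ⟫| ≤ C := by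
    intro x₀ w
    have hw : w ∈ Submodule.span ℝ {w : Ed d | ∃ η : Fin d → ℤ, a η x₀ < 0 ∧ w = zv η} := by
      rw [hspan]; trivial
    induction hw using Submodule.span_induction with
    | mem w hw =>
      obtain ⟨η, hη, rfl⟩ := hw
      have e1 : ∀ᶠ x in nhds x₀, a η x < a η x₀ / 2 :=
        (hsm η).continuous.continuousAt.eventually_lt continuousAt_const (by linarith)
      have e2 : ∀ᶠ x in nhds x₀, V₀ x < V₀ x₀ + 1 :=
        hVc.continuousAt.eventually_lt continuousAt_const (by linarith)
      refine ⟨2 * (V₀ x₀ + 1) / (- a η x₀ / 2) + 1, ?_⟩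
      filter_upwards [e1, e2] with x h1 h2 ξ hξ
      have h3 := hterm x ξ hξ η
      have h4 := aux_cosh ⟪zv η, ξ⟫
      have hδ : 0 < - a η x₀ / 2 := by linarith
      have h5 : (⟪zv η, ξ⟫) ^ 2 ≤ 2 * (V₀ x₀ + 1) / (- a η x₀ / 2) := by
        rw [le_div_iff₀ hδ]
        nlinarith [sq_nonneg ⟪zv η, ξ⟫]
      have h6 := sq_abs ⟪zv η, ξ⟫
      nlinarith [sq_nonneg (|⟪zv η, ξ⟫| - 1), sq_nonneg (|⟪zv η, ξ⟫|)]
    | zero => exact ⟨0, by simp⟩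
    | add u v _ _ hu hv =>
      obtain ⟨C, hC⟩ := hu
      obtain ⟨D, hD⟩ := hv
      refine ⟨C + D, ?_⟩
      filter_upwards [hC, hD] with x h1 h2 ξ hξ
      rw [inner_add_left]
      exact (abs_add_le _ _).trans (add_le_add (h1 ξ hξ) (h2 ξ hξ))
    | smul r u _ hu =>
      obtain ⟨C, hC⟩ := hu
      refine ⟨|r| * C, ?_⟩
      filter_upwards [hC] with x h1 ξ hξ
      rw [real_inner_smul_left, abs_mul]
      exact mul_le_mul_of_nonneg_left (h1 ξ hξ) (abs_nonneg _)
  have hloc2 : ∀ x₀ : Ed d, ∃ C : ℝ, ∀ᶠ x in nhds x₀, ∀ ξ : Ed d, h0 x ξ = 0 → ‖ξ‖ ≤ C := by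
    intro x₀
    choose C hC using fun i : Fin d => hloc x₀ (EuclideanSpace.single i 1)
    refine ⟨∑ i, C i, ?_⟩
    filter_upwards [Filter.eventually_all.2 hC] with x h1 ξ hξ
    have h2 : ξ = ∑ i, ξ i • EuclideanSpace.single i (1:ℝ) := by
      have := (EuclideanSpace.basisFun (Fin d) ℝ).sum_repr ξ
      simpa using this.symm
    calc ‖ξ‖ = ‖∑ i, ξ i • EuclideanSpace.single i (1:ℝ)‖ := by rw [← h2]
      _ ≤ ∑ i, ‖ξ i • EuclideanSpace.single i (1:ℝ)‖ := norm_sum_le _ _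
      _ ≤ ∑ i, C i := by
        refine Finset.sum_le_sum (fun i _ => ?_)
        have := h1 i ξ hξ
        simpa [norm_smul, EuclideanSpace.inner_single_left] using this
  have hcpt : ∀ K : Set (Ed d), IsCompact K →
      ∃ C : ℝ, 0 < C ∧ ∀ x ∈ K, ∀ v : Ed d, |ℓ x v| ≤ C * ‖v‖ := by
    intro K hK
    have : ∃ C : ℝ, ∀ x ∈ K, ∀ ξ : Ed d, h0 x ξ = 0 → ‖ξ‖ ≤ C := by
      refine hK.induction_on (p := fun K => ∃ C : ℝ, ∀ x ∈ K, ∀ ξ : Ed d, h0 x ξ = 0 → ‖ξ‖ ≤ C)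
        ⟨0, by simp⟩ ?_ ?_ ?_
      · rintro s t hst ⟨C, hC⟩
        exact ⟨C, fun x hx => hC x (hst hx)⟩
      · rintro s t ⟨C, hC⟩ ⟨D, hD⟩
        refine ⟨max C D, ?_⟩
        rintro x (hx | hx) ξ hξ
        · exact (hC x hx ξ hξ).trans (le_max_left _ _)
        · exact (hD x hx ξ hξ).trans (le_max_right _ _)
      · intro x _
        obtain ⟨C, hC⟩ := hloc2 x
        exact ⟨_, mem_nhdsWithin_of_mem_nhds hC, C, fun y hy => hy⟩
    obtain ⟨C, hC⟩ := this
    refine ⟨|C| + 1, by positivity, fun x hx v => ?_⟩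
    rw [hℓ]
    split_ifs with h
    · rw [abs_zero]; positivity
    · push Not at h
      have h1 := hC x hx _ (hlam x h.1 v h.2).2
      refine (abs_real_inner_le_norm _ _).trans (mul_le_mul_of_nonneg_right ?_ (norm_nonneg _))
      linarith [le_abs_self C]
  have hpos : ∀ x v : Ed d, 0 ≤ ℓ x v := by
    intro x v
    rw [hℓ]
    split_ifs with h
    · exact le_rfl
    · push Not at h
      have h1 := (hlam x h.1 v h.2).1
      have h2 := aux_grad (h0 x) (ξh x (lam x v • v)) (hmono x _)
      rw [hξh1, real_inner_smul_left, real_inner_comm] at h2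
      exact nonneg_of_mul_nonneg_right h2 h1
  have hle : ∀ (γ : ℝ → Ed d), ContDiffOn ℝ 2 γ (Set.Icc 0 1) →
      (∀ t ∈ Set.Icc (0:ℝ) 1, deriv γ t ≠ 0) → ∀ C : ℝ,
      (∀ t ∈ Set.Icc (0:ℝ) 1, |ℓ (γ t) (deriv γ t)| ≤ C) → dl (γ 0) (γ 1) ≤ C := by
    intro γ h1 h2 C h3
    rw [hdl]
    refine le_trans (b := ∫ t in (0:ℝ)..1, ℓ (γ t) (deriv γ t))
      (csInf_le ⟨0, ?_⟩ ⟨γ, h1, rfl, rfl, h2, rfl⟩) ?_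
    · rintro L ⟨γ', -, -, -, -, rfl⟩
      exact intervalIntegral.integral_nonneg zero_le_one (fun t _ => hpos _ _)
    · have := intervalIntegral.norm_integral_le_of_norm_le_const (a := (0:ℝ)) (b := 1)
        (f := fun t => ℓ (γ t) (deriv γ t)) (C := C) (fun t ht => by
          rw [Set.uIoc_of_le zero_le_one] at ht
          exact h3 t ⟨ht.1.le, ht.2⟩)
      simp only [sub_zero, abs_one, mul_one] at this
      exact (le_abs_self _).trans this
  have hself : ∀ x : Ed d, dl x x ≤ 0 := by
    intro x
    rcases Set.eq_empty_or_nonempty {L : ℝ | ∃ γ : ℝ → Ed d,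
      ContDiffOn ℝ 2 γ (Set.Icc 0 1) ∧ γ 0 = x ∧ γ 1 = x ∧
      (∀ t ∈ Set.Icc (0:ℝ) 1, deriv γ t ≠ 0) ∧
      L = ∫ t in (0:ℝ)..1, ℓ (γ t) (deriv γ t)} with he | ⟨L, γ, h1, h2, h3, h4, -⟩
    · rw [hdl, he, Real.sInf_empty]
    · obtain ⟨M, hM⟩ := aux_bdd γ h1 h4
      obtain ⟨B, hB⟩ := isCompact_Icc.exists_bound_of_continuousOn
        (h1.continuousOn.sub (continuousOn_const (c := x)))
      obtain ⟨C, hC0, hC⟩ := hcpt (Metric.closedBall x B) (isCompact_closedBall _ _)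
      have key : ∀ s ∈ Set.Ioc (0:ℝ) 1, dl x x ≤ C * (s * M) := by
        rintro s ⟨hs0, hs1⟩
        have hder : ∀ t, deriv (fun t => x + s • (γ t - x)) t = s • deriv γ t := by
          intro t
          rw [deriv_const_add, deriv_fun_const_smul_field, deriv_sub_const]
        have := hle (fun t => x + s • (γ t - x))
          (contDiffOn_const.add ((h1.sub contDiffOn_const).const_smul s))
          (fun t ht => by
            rw [hder]; exact smul_ne_zero hs0.ne' (h4 t ht)) (C * (s * M))
          (fun t ht => by
            rw [hder]
            refine (hC _ ?_ _).trans ?_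
            · rw [mem_closedBall_iff_norm, add_sub_cancel_left, norm_smul, Real.norm_eq_abs,
                abs_of_pos hs0]
              have := hB t ht
              simp only [Pi.sub_apply] at this
              nlinarith [norm_nonneg (γ t - x)]
            · rw [norm_smul, Real.norm_eq_abs, abs_of_pos hs0]
              gcongr
              exact hM t ht)
        simpa [h2, h3] using this
      have ht : Filter.Tendsto (fun s : ℝ => C * (s * M)) (nhdsWithin 0 (Set.Ioi 0)) (nhds 0) := by
        have : Continuous (fun s : ℝ => C * (s * M)) := by fun_prop
        have h := this.tendsto 0
        simp only [zero_mul, mul_zero] at h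
        exact h.mono_left nhdsWithin_le_nhds
      refine ge_of_tendsto ht ?_
      filter_upwards [Ioc_mem_nhdsGT (zero_lt_one (α := ℝ))] with s hs using key s hs
  intro K hK
  obtain ⟨R, hR⟩ := hK.isBounded.subset_closedBall (0 : Ed d)
  obtain ⟨C, hC0, hC⟩ := hcpt (Metric.closedBall 0 R) (isCompact_closedBall _ _)
  refine ⟨C, hC0, fun x hx y hy => ?_⟩
  by_cases hxy : x = y
  · subst hxy; simpa using hself x
  · have hder : ∀ t, deriv (fun t : ℝ => x + t • (y - x)) t = y - x := by
      intro t
      have : HasDerivAt (fun t : ℝ => x + t • (y - x)) (y - x) t := by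
        simpa using ((hasDerivAt_id t).smul_const (y - x)).const_add x
      exact this.deriv
    have := hle (fun t : ℝ => x + t • (y - x)) (by fun_prop)
      (fun t _ => by rw [hder]; exact sub_ne_zero.2 (Ne.symm hxy)) (C * ‖x - y‖)
      (fun t ht => by
        rw [hder, norm_sub_rev]
        exact hC _ ((convex_closedBall (0 : Ed d) R).add_smul_sub_mem (hR hx) (hR hy) ht) _)
    simpa using this
end
end

section
/- Let h̃₀, ℓ and d_ℓ be as follows: h̃₀(x,ξ) := −Σ_{η∈ℤ^d} ã_η(x) cosh(η·ξ) − V₀(x) with ã smooth coefficients satisfying ã_η(x) ≤ 0 for η ≠ 0, ã_η(x) = ã_{−η}(x), span{η : ã_η(x) < 0} = ℝ^d, Σ_η e^{c|η|} sup_{x∈K}|∂_x^β ã_η(x)| < ∞ for all c > 0, compact K, multi-index β, and V₀ ∈ C^∞(ℝ^d), V₀ ≥ 0, V₀(x) = 0 exactly at x = 0 with nondegenerate minimum; ℓ(x,v) := ξ_{h̃₀}(x, λ(x,v)v)·v the Finsler function of h̃₀ at energy 0 (ξ_{h̃₀}(x,·) = (∇_ξ h̃₀(x,·))^{-1}, λ(x,v)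 > 0 the unique number with h̃₀(x, ξ_{h̃₀}(x, λ(x,v)v)) = 0), extended by ℓ(0,·) = 0; d_ℓ(x,y) := inf ∫_0^1 ℓ(γ,γ̇) dt over regular C² curves from x to y; d⁰(x) := d_ℓ(0,x). Then at every point x ≠ 0 at which d⁰ is differentiable, the eikonal inequality h̃₀(x, ∇d⁰(x)) ≤ 0 holds; in particular, since d⁰ is locally Lipschitz, the inequality holds almost everywhere in ℝ^d. -/
open scoped RealInnerProductSpace Classical
noncomputable section

lemma aux_cosh_le (x y : ℝ) (h : |x| ≤ y) : Real.cosh x ≤ Real.exp y := by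
  rw [← Real.cosh_abs, Real.cosh_eq]
  have h1 : Real.exp |x| ≤ Real.exp y := Real.exp_le_exp.2 h
  have h2 : Real.exp (-|x|) ≤ Real.exp y :=
    Real.exp_le_exp.2 (by have := abs_nonneg x; linarith)
  linarith

lemma aux_sinh_le (x y : ℝ) (h : |x| ≤ y) : |Real.sinh x| ≤ Real.exp y := by
  rw [Real.abs_sinh]
  refine (Real.sinh_lt_cosh _).le.trans ?_
  exact aux_cosh_le _ _ (by rwa [abs_abs])

lemma aux_convex_cosh : ConvexOn ℝ Set.univ Real.cosh := by
  refine ⟨convex_univ, fun x _ y _ a b ha hb hab => ?_⟩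
  have h1 := convexOn_exp.2 (Set.mem_univ x) (Set.mem_univ y) ha hb hab
  have h2 := convexOn_exp.2 (Set.mem_univ (-x)) (Set.mem_univ (-y)) ha hb hab
  simp only [smul_eq_mul, Real.cosh_eq] at *
  have h3 : -(a * x + b * y) = a * -x + b * -y := by ring
  rw [h3]
  linarith

lemma aux_grad_ineq {d : ℕ} (h : Ed d → ℝ) (hc : ConvexOn ℝ Set.univ h) (p q : Ed d)
    (hd : DifferentiableAt ℝ h p) : h p + ⟪gradient h p, q - p⟫ ≤ h q := by
  have h1 : HasGradientAt h (gradient h p) p := hd.hasGradientAt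
  have h2 : HasDerivAt (fun t : ℝ => p + t • (q - p)) (q - p) 0 := by
    simpa using ((hasDerivAt_id (0:ℝ)).smul_const (q - p)).const_add p
  have h3 : HasDerivAt (fun t : ℝ => h (p + t • (q - p))) ⟪gradient h p, q - p⟫ 0 := by
    have h1' : HasFDerivAt h ((InnerProductSpace.toDual ℝ (Ed d)) (gradient h p))
        (p + (0:ℝ) • (q - p)) := by
      simpa using h1.hasFDerivAt
    have h4 := h1'.comp_hasDerivAt (0:ℝ) h2
    rw [InnerProductSpace.toDual_apply_apply] at h4
    exact h4
  have hc' : ConvexOn ℝ Set.univ (fun t : ℝ => h (p + t • (q - p))) := by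
    refine ⟨convex_univ, fun x _ y _ a b ha hb hab => ?_⟩
    have := hc.2 (Set.mem_univ (p + x • (q - p))) (Set.mem_univ (p + y • (q - p))) ha hb hab
    refine le_trans (le_of_eq ?_) this
    show h _ = h _
    congr 1
    obtain rfl : b = 1 - a := by linarith
    simp only [smul_eq_mul]
    module
  have := hc'.le_slope_of_hasDerivAt (Set.mem_univ 0) (Set.mem_univ 1) one_pos h3
  simp only [slope_def_field, zero_smul, one_smul, add_zero, sub_zero, div_one,
    add_sub_cancel] at this
  linarith

lemma aux_bound {d : ℕ} (a : (Fin d → ℤ) → Ed d → ℝ)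
    (hdecay : ∀ c : ℝ, 0 < c → ∀ K : Set (Ed d), IsCompact K → ∀ n : ℕ,
      ∃ M : (Fin d → ℤ) → ℝ,
        (∀ η : Fin d → ℤ, ∀ x ∈ K, ‖iteratedFDeriv ℝ n (a η) x‖ ≤ M η) ∧
        Summable (fun η : Fin d → ℤ => Real.exp (c * ‖zv η‖) * M η))
    (c r : ℝ) (hc : 0 < c) : ∃ M : (Fin d → ℤ) → ℝ,
        (∀ η : Fin d → ℤ, ∀ x ∈ Metric.closedBall (0 : Ed d) r, |a η x| ≤ M η) ∧
        Summable (fun η : Fin d → ℤ => Real.exp (c * ‖zv η‖) * M η) := by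
  obtain ⟨M, h1, h2⟩ := hdecay c hc _ (isCompact_closedBall (0 : Ed d) r) 0
  exact ⟨M, fun η x hx => by simpa using h1 η x hx, h2⟩

lemma aux_inner_le {d : ℕ} (η ξ : Ed d) (r : ℝ) (h : ‖ξ‖ ≤ r) : |⟪η, ξ⟫| ≤ r * ‖η‖ := by
  refine (abs_real_inner_le_norm _ _).trans ?_
  rw [mul_comm]
  exact mul_le_mul_of_nonneg_right h (norm_nonneg _)

section H
variable {d : ℕ} {a : (Fin d → ℤ) → Ed d → ℝ} {V₀ : Ed d → ℝ}

lemma aux_summable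
    (hdecay : ∀ c : ℝ, 0 < c → ∀ K : Set (Ed d), IsCompact K → ∀ n : ℕ,
      ∃ M : (Fin d → ℤ) → ℝ,
        (∀ η : Fin d → ℤ, ∀ x ∈ K, ‖iteratedFDeriv ℝ n (a η) x‖ ≤ M η) ∧
        Summable (fun η : Fin d → ℤ => Real.exp (c * ‖zv η‖) * M η)) (x ξ : Ed d) :
    Summable (fun η : Fin d → ℤ => a η x * Real.cosh ⟪zv η, ξ⟫) := by
  obtain ⟨M, h1, h2⟩ := aux_bound a hdecay (‖ξ‖ + 1) ‖x‖ (by positivity)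
  refine Summable.of_norm_bounded h2 fun η => ?_
  have hM := h1 η x (by simp)
  rw [Real.norm_eq_abs, abs_mul, abs_of_pos (Real.cosh_pos _), mul_comm]
  exact mul_le_mul (aux_cosh_le _ _ (aux_inner_le _ _ _ (by linarith))) hM (abs_nonneg _)
    (Real.exp_pos _).le

lemma aux_cont
    (hsm : ∀ η : Fin d → ℤ, ContDiff ℝ (⊤ : ℕ∞) (a η))
    (hdecay : ∀ c : ℝ, 0 < c → ∀ K : Set (Ed d), IsCompact K → ∀ n : ℕ,
      ∃ M : (Fin d → ℤ) → ℝ,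
        (∀ η : Fin d → ℤ, ∀ x ∈ K, ‖iteratedFDeriv ℝ n (a η) x‖ ≤ M η) ∧
        Summable (fun η : Fin d → ℤ => Real.exp (c * ‖zv η‖) * M η))
    (hVsm : ContDiff ℝ (⊤ : ℕ∞) V₀)
    (h0 : Ed d → Ed d → ℝ)
    (hh0 : ∀ x ξ : Ed d,
      h0 x ξ = -(∑' η : Fin d → ℤ, a η x * Real.cosh ⟪zv η, ξ⟫) - V₀ x) :
    Continuous (fun p : Ed d × Ed d => h0 p.1 p.2) := by
  simp only [hh0]
  refine (Continuous.neg ?_).sub (hVsm.continuous.comp continuous_fst)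
  rw [continuous_iff_continuousAt]
  rintro ⟨x, ξ⟩
  obtain ⟨M, h1, h2⟩ := aux_bound a hdecay (‖ξ‖ + 1) (‖x‖ + 1) (by positivity)
  have hs : Metric.ball (0 : Ed d) (‖x‖ + 1) ×ˢ Metric.ball (0 : Ed d) (‖ξ‖ + 1) ∈
      nhds (x, ξ) := by
    refine (Metric.isOpen_ball.prod Metric.isOpen_ball).mem_nhds ⟨?_, ?_⟩ <;> simp
  refine ContinuousOn.continuousAt (continuousOn_tsum ?_ h2 ?_) hs
  · intro η
    refine Continuous.continuousOn ?_
    have := (hsm η).continuous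
    have h4 := Real.continuous_cosh
    fun_prop
  · rintro η ⟨y, ζ⟩ ⟨hy, hz⟩
    simp only [mem_ball_zero_iff] at hy hz
    have hM := h1 η y (by simpa using hy.le)
    rw [Real.norm_eq_abs, abs_mul, abs_of_pos (Real.cosh_pos _), mul_comm]
    exact mul_le_mul (aux_cosh_le _ _ (aux_inner_le _ _ _ hz.le)) hM (abs_nonneg _)
      (Real.exp_pos _).le

lemma aux_diff
    (hdecay : ∀ c : ℝ, 0 < c → ∀ K : Set (Ed d), IsCompact K → ∀ n : ℕ,
      ∃ M : (Fin d → ℤ) → ℝ,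
        (∀ η : Fin d → ℤ, ∀ x ∈ K, ‖iteratedFDeriv ℝ n (a η) x‖ ≤ M η) ∧
        Summable (fun η : Fin d → ℤ => Real.exp (c * ‖zv η‖) * M η))
    (h0 : Ed d → Ed d → ℝ)
    (hh0 : ∀ x ξ : Ed d,
      h0 x ξ = -(∑' η : Fin d → ℤ, a η x * Real.cosh ⟪zv η, ξ⟫) - V₀ x) (x : Ed d) :
    Differentiable ℝ (h0 x) := by
  intro ξ
  have e : h0 x = fun ξ => -(∑' η : Fin d → ℤ, a η x * Real.cosh ⟪zv η, ξ⟫) - V₀ x :=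
    funext (hh0 x)
  rw [e]
  obtain ⟨M, h1, h2⟩ := aux_bound a hdecay (‖ξ‖ + 1 + 1) ‖x‖ (by positivity)
  refine DifferentiableAt.sub (DifferentiableAt.neg ?_) (differentiableAt_const _)
  refine (hasFDerivAt_tsum_of_isPreconnected
    (f' := fun η ζ => (a η x) • (Real.sinh ⟪zv η, ζ⟫ • (innerSL ℝ (zv η)))) h2
    (Metric.isOpen_ball (x := (0 : Ed d)) (ε := ‖ξ‖ + 1))
    (convex_ball _ _).isPreconnected ?_ ?_ (x₀ := ξ) (by simp)
    (aux_summable hdecay x ξ) (by simp)).differentiableAt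
  · intro η ζ _
    refine HasFDerivAt.const_mul ?_ _
    have h3 : HasFDerivAt (fun ζ : Ed d => ⟪zv η, ζ⟫) (innerSL ℝ (zv η)) ζ :=
      (innerSL ℝ (zv η)).hasFDerivAt
    exact (Real.hasDerivAt_cosh _).comp_hasFDerivAt ζ h3
  · intro η ζ hz
    simp only [mem_ball_zero_iff] at hz
    have hM := h1 η x (by simp)
    rw [norm_smul, norm_smul, innerSL_apply_norm, Real.norm_eq_abs, Real.norm_eq_abs, mul_comm]
    have h5 := aux_sinh_le _ _ (aux_inner_le (zv η) ζ _ hz.le)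
    have h6 : ‖zv η‖ ≤ Real.exp ‖zv η‖ := by
      have := Real.add_one_le_exp ‖zv η‖; linarith
    refine mul_le_mul ?_ hM (abs_nonneg _) (Real.exp_pos _).le
    rw [add_mul _ 1, one_mul, Real.exp_add]
    exact mul_le_mul h5 h6 (norm_nonneg _) (Real.exp_pos _).le

lemma aux_conv
    (hneg : ∀ η : Fin d → ℤ, η ≠ 0 → ∀ x : Ed d, a η x ≤ 0)
    (hdecay : ∀ c : ℝ, 0 < c → ∀ K : Set (Ed d), IsCompact K → ∀ n : ℕ,
      ∃ M : (Fin d → ℤ) → ℝ,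
        (∀ η : Fin d → ℤ, ∀ x ∈ K, ‖iteratedFDeriv ℝ n (a η) x‖ ≤ M η) ∧
        Summable (fun η : Fin d → ℤ => Real.exp (c * ‖zv η‖) * M η))
    (h0 : Ed d → Ed d → ℝ)
    (hh0 : ∀ x ξ : Ed d,
      h0 x ξ = -(∑' η : Fin d → ℤ, a η x * Real.cosh ⟪zv η, ξ⟫) - V₀ x) (x : Ed d) :
    ConvexOn ℝ Set.univ (h0 x) := by
  refine ⟨convex_univ, fun p _ q _ s t hs ht hst => ?_⟩
  simp only [hh0, smul_eq_mul]
  have key : s * (∑' η : Fin d → ℤ, a η x * Real.cosh ⟪zv η, p⟫) +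
      t * (∑' η : Fin d → ℤ, a η x * Real.cosh ⟪zv η, q⟫) ≤
      ∑' η : Fin d → ℤ, a η x * Real.cosh ⟪zv η, s • p + t • q⟫ := by
    have hp := aux_summable hdecay x p
    have hq := aux_summable hdecay x q
    rw [← tsum_mul_left, ← tsum_mul_left, ← (hp.mul_left s).tsum_add (hq.mul_left t)]
    refine Summable.tsum_le_tsum (fun η => ?_) ((hp.mul_left s).add (hq.mul_left t))
      (aux_summable hdecay x _)
    by_cases hη : η = 0
    · have : zv η = 0 := by subst hη; ext i; simp [zv]
      simp only [this, inner_zero_left, Real.cosh_zero, mul_one]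
      rw [← add_mul, hst, one_mul]
    · have h1 := aux_convex_cosh.2 (Set.mem_univ ⟪zv η, p⟫) (Set.mem_univ ⟪zv η, q⟫) hs ht hst
      rw [inner_add_right, inner_smul_right, inner_smul_right]
      simp only [smul_eq_mul] at h1
      have := mul_le_mul_of_nonpos_left h1 (hneg η hη x)
      linarith
  have hV : V₀ x = s * V₀ x + t * V₀ x := by rw [← add_mul, hst, one_mul]
  linarith
end H

section Supp
variable {d : ℕ} {h0 : Ed d → Ed d → ℝ}

lemma aux_loc (hc : ∀ x, ConvexOn ℝ Set.univ (h0 x)) (hd : ∀ x, Differentiable ℝ (h0 x))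
    (hcont : Continuous (fun p : Ed d × Ed d => h0 p.1 p.2))
    (hz : ∀ x, h0 x 0 ≤ 0)
    (ξh : Ed d → Ed d → Ed d)
    (hξh1 : ∀ x v : Ed d, gradient (h0 x) (ξh x v) = v) (x : Ed d) (hx : x ≠ 0) :
    ∃ r > 0, ∃ R > 0, ∀ y ∈ Metric.ball x r, y ≠ 0 ∧ ∀ ξ, h0 y ξ ≤ 0 → ‖ξ‖ ≤ R := by
  have key : ∀ v : Ed d, ∃ C : ℝ, ∀ ξ, h0 x ξ ≤ 0 → ⟪v, ξ⟫ ≤ C := by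
    intro v
    refine ⟨⟪v, ξh x v⟫ - h0 x (ξh x v), fun ξ hξ => ?_⟩
    have := aux_grad_ineq (h0 x) (hc x) (ξh x v) ξ (hd x _)
    rw [hξh1, inner_sub_right] at this
    linarith
  choose C hC using key
  have hb : ∀ ξ, h0 x ξ ≤ 0 → ‖ξ‖ ≤
      ∑ i : Fin d, max (C (EuclideanSpace.single i 1)) (C (-EuclideanSpace.single i 1)) := by
    intro ξ hξ
    have h1 : ‖ξ‖ ≤ ∑ i : Fin d, |ξ i| := by
      have h2 : ξ = ∑ i : Fin d, ξ i • (EuclideanSpace.single i (1:ℝ)) := by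
        ext j
        simp [Finset.sum_apply, Pi.single_apply]
      calc ‖ξ‖ = ‖∑ i : Fin d, ξ i • (EuclideanSpace.single i (1:ℝ))‖ := by rw [← h2]
        _ ≤ ∑ i : Fin d, ‖ξ i • (EuclideanSpace.single i (1:ℝ))‖ := norm_sum_le _ _
        _ = _ := by simp [norm_smul]
    have hin : ∀ i, ⟪EuclideanSpace.single i (1:ℝ), ξ⟫ = ξ i := fun i =>
      (EuclideanSpace.inner_single_left i (1:ℝ) ξ).trans (by simp)
    refine h1.trans (Finset.sum_le_sum fun i _ => abs_le'.2 ⟨?_, ?_⟩)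
    · have := hC (EuclideanSpace.single i 1) ξ hξ
      rw [hin] at this
      exact this.trans (le_max_left _ _)
    · have := hC (-EuclideanSpace.single i 1) ξ hξ
      rw [inner_neg_left, hin] at this
      exact le_trans (by linarith) (le_max_right _ _)
  set R0 := ∑ i : Fin d, max (C (EuclideanSpace.single i 1)) (C (-EuclideanSpace.single i 1))
  set R := |R0| + 1 with hR
  have hRpos : 0 < R := by positivity
  have hs : ∀ᶠ y in nhds x, ∀ ξ ∈ Metric.sphere (0 : Ed d) R, 0 < h0 y ξ := by
    refine (isCompact_sphere (0 : Ed d) R).eventually_forall_of_forall_eventually ?_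
    intro ξ hξ
    have h1 : 0 < h0 x ξ := by
      by_contra hcon
      have := hb ξ (not_lt.1 hcon)
      simp at hξ
      have := le_abs_self R0
      linarith
    exact (hcont.tendsto (x, ξ)).eventually (lt_mem_nhds h1)
  obtain ⟨r, hr, hball⟩ := Metric.eventually_nhds_iff_ball.1 (hs.and (eventually_ne_nhds hx))
  refine ⟨r, hr, R, hRpos, fun y hy => ⟨(hball y hy).2, fun ξ hξ => ?_⟩⟩
  by_contra hcon
  push Not at hcon
  have hn : 0 < ‖ξ‖ := hRpos.trans hcon
  have h1 := (hball y hy).1 ((R / ‖ξ‖) • ξ) (by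
    simp [norm_smul, abs_of_pos hRpos]; field_simp)
  have hle : R / ‖ξ‖ ≤ 1 := by rw [div_le_one hn]; exact hcon.le
  have hge : 0 ≤ R / ‖ξ‖ := by positivity
  have h2 := (hc y).2 (Set.mem_univ ξ) (Set.mem_univ 0) hge (sub_nonneg.2 hle) (by ring)
  simp only [smul_zero, add_zero, smul_eq_mul] at h2
  have h3 := mul_nonpos_of_nonneg_of_nonpos hge hξ
  have h4 := mul_nonpos_of_nonneg_of_nonpos (sub_nonneg.2 hle) (hz y)
  linarith

variable {ℓ : Ed d → Ed d → ℝ}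

lemma aux_supp (hc : ∀ x, ConvexOn ℝ Set.univ (h0 x)) (hd : ∀ x, Differentiable ℝ (h0 x))
    (hz : ∀ x, h0 x 0 ≤ 0)
    (ξh : Ed d → Ed d → Ed d)
    (hξh1 : ∀ x v : Ed d, gradient (h0 x) (ξh x v) = v)
    (lam : Ed d → Ed d → ℝ)
    (hlam : ∀ x : Ed d, x ≠ 0 → ∀ v : Ed d, v ≠ 0 →
      0 < lam x v ∧ h0 x (ξh x (lam x v • v)) = 0)
    (hℓ : ∀ x v : Ed d,
      ℓ x v = if x = 0 ∨ v = 0 then 0 else ⟪ξh x (lam x v • v), v⟫) (x : Ed d) (hx : x ≠ 0)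
    (v : Ed d) : (∀ ξ, h0 x ξ ≤ 0 → ⟪ξ, v⟫ ≤ ℓ x v) ∧ ∃ ξ, h0 x ξ ≤ 0 ∧ ℓ x v = ⟪ξ, v⟫ := by
  by_cases hv : v = 0
  · subst hv
    have : ℓ x 0 = 0 := by simp [hℓ]
    rw [this]
    exact ⟨fun ξ _ => by simp, 0, hz x, by simp⟩
  · obtain ⟨h1, h2⟩ := hlam x hx v hv
    have h3 : ℓ x v = ⟪ξh x (lam x v • v), v⟫ := by simp [hℓ, hx, hv]
    refine ⟨fun ξ hξ => ?_, _, h2.le, h3⟩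
    rw [h3]
    have := aux_grad_ineq (h0 x) (hc x) (ξh x (lam x v • v)) ξ (hd x _)
    rw [hξh1, h2, inner_smul_left, inner_sub_right, real_inner_comm ξ v,
      real_inner_comm (ξh x (lam x v • v)) v] at this
    simp only [conj_trivial, zero_add] at this
    have h4 := this.trans hξ
    by_contra hcon
    push Not at hcon
    have := mul_pos h1 (sub_pos.2 hcon)
    linarith

lemma aux_ell_cont (hc : ∀ x, ConvexOn ℝ Set.univ (h0 x))
    (hcont : Continuous (fun p : Ed d × Ed d => h0 p.1 p.2))
    (hz : ∀ x, x ≠ 0 → h0 x 0 < 0)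
    (hloc : ∀ x : Ed d, x ≠ 0 →
      ∃ r > 0, ∃ R > 0, ∀ y ∈ Metric.ball x r, y ≠ 0 ∧ ∀ ξ, h0 y ξ ≤ 0 → ‖ξ‖ ≤ R)
    (hsupp : ∀ x : Ed d, x ≠ 0 → ∀ v,
      (∀ ξ, h0 x ξ ≤ 0 → ⟪ξ, v⟫ ≤ ℓ x v) ∧ ∃ ξ, h0 x ξ ≤ 0 ∧ ℓ x v = ⟪ξ, v⟫)
    (x : Ed d) (hx : x ≠ 0) (v : Ed d) :
    ContinuousAt (fun p : Ed d × Ed d => ℓ p.1 p.2) (x, v) := by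
  obtain ⟨r, hr, R, hR, hball⟩ := hloc x hx
  have hne : ∀ᶠ p : Ed d × Ed d in nhds (x, v), p.1 ∈ Metric.ball x r :=
    (continuous_fst.tendsto (x, v)).eventually (Metric.ball_mem_nhds x hr)
  refine tendsto_order.2 ⟨fun c hcl => ?_, fun c hcl => ?_⟩
  · obtain ⟨ξ, h1, h2⟩ := (hsupp x hx v).2
    simp only at hcl
    have h3 : Filter.Tendsto (fun s : ℝ => ⟪(1 - s) • ξ, v⟫) (nhdsWithin 0 (Set.Ioi 0))
        (nhds ⟪ξ, v⟫) := by
      have : Continuous (fun s : ℝ => ⟪(1 - s) • ξ, v⟫) := by fun_prop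
      simpa using (this.tendsto 0).mono_left nhdsWithin_le_nhds
    have h4 := h3.eventually (lt_mem_nhds (h2 ▸ hcl))
    have h5 : ∀ᶠ s : ℝ in nhdsWithin 0 (Set.Ioi 0), s < 1 ∧ 0 < s :=
      (Filter.Eventually.filter_mono nhdsWithin_le_nhds (gt_mem_nhds one_pos)).and
        self_mem_nhdsWithin
    obtain ⟨s, hs1, hs2, hs3⟩ := (h4.and h5).exists
    have h6 : h0 x ((1 - s) • ξ) < 0 := by
      have := (hc x).2 (Set.mem_univ ξ) (Set.mem_univ 0) (sub_nonneg.2 hs2.le) hs3.le (by ring)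
      simp only [smul_zero, add_zero, smul_eq_mul] at this
      have h7 := mul_nonpos_of_nonneg_of_nonpos (sub_nonneg.2 hs2.le) h1
      have h8 := mul_neg_of_pos_of_neg hs3 (hz x hx)
      linarith
    have e1 : ∀ᶠ p : Ed d × Ed d in nhds (x, v), h0 p.1 ((1 - s) • ξ) < 0 := by
      have : Continuous (fun p : Ed d × Ed d => h0 p.1 ((1 - s) • ξ)) :=
        hcont.comp (continuous_fst.prodMk continuous_const)
      exact (this.tendsto (x, v)).eventually (gt_mem_nhds h6)
    have e2 : ∀ᶠ p : Ed d × Ed d in nhds (x, v), c < ⟪(1 - s) • ξ, p.2⟫ := by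
      have : Continuous (fun p : Ed d × Ed d => ⟪(1 - s) • ξ, p.2⟫) := by fun_prop
      exact (this.tendsto (x, v)).eventually (lt_mem_nhds hs1)
    filter_upwards [e1, e2, hne] with p hp1 hp2 hp3
    exact hp2.trans_le ((hsupp p.1 (hball _ hp3).1 p.2).1 _ hp1.le)
  · simp only at hcl
    have e1 : ∀ᶠ p : Ed d × Ed d in nhds (x, v), ∀ ξ ∈ Metric.closedBall (0 : Ed d) R,
        0 < h0 p.1 ξ ∨ ⟪ξ, p.2⟫ < c := by
      refine (isCompact_closedBall (0 : Ed d) R).eventually_forall_of_forall_eventually ?_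
      intro ξ _
      by_cases hξ : h0 x ξ ≤ 0
      · have h1 := ((hsupp x hx v).1 ξ hξ).trans_lt hcl
        have : Continuous (fun z : (Ed d × Ed d) × Ed d => ⟪z.2, z.1.2⟫) := by fun_prop
        filter_upwards [(this.tendsto ((x, v), ξ)).eventually (gt_mem_nhds h1)] with z hz
        exact Or.inr hz
      · have : Continuous (fun z : (Ed d × Ed d) × Ed d => h0 z.1.1 z.2) :=
          hcont.comp (continuous_fst.fst.prodMk continuous_snd)
        filter_upwards [(this.tendsto ((x, v), ξ)).eventually
          (lt_mem_nhds (not_le.1 hξ))] with z hz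
        exact Or.inl hz
    filter_upwards [e1, hne] with p hp1 hp3
    obtain ⟨ξ, h1, h2⟩ := (hsupp p.1 (hball _ hp3).1 p.2).2
    rw [h2]
    rcases hp1 ξ (by simpa using (hball _ hp3).2 ξ h1) with h | h
    · linarith
    · exact h
end Supp

/-- Smooth cut-off vanishing for `t ≤ 1 - δ`, equal to `1` at `t = 1`. -/
def auxPhi (δ t : ℝ) : ℝ := ((t - (1 - δ)) / δ) ^ (5 / 2 : ℝ)

/-- Derivative of `auxPhi`. -/
def auxDPhi (δ t : ℝ) : ℝ := (5 / 2) * ((t - (1 - δ)) / δ) ^ (3 / 2 : ℝ) / δ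

lemma aux_rpow52 (s : ℝ) (h : s ≤ 0) : s ^ (5 / 2 : ℝ) = 0 := by
  rcases h.lt_or_eq with h | h
  · rw [Real.rpow_def_of_neg h]
    have : Real.cos (5 / 2 * Real.pi) = 0 := by
      rw [Real.cos_eq_zero_iff]; exact ⟨2, by push_cast; ring⟩
    rw [this, mul_zero]
  · rw [h]; exact Real.zero_rpow (by norm_num)

lemma aux_rpow32 (s : ℝ) (h : s ≤ 0) : s ^ (3 / 2 : ℝ) = 0 := by
  rcases h.lt_or_eq with h | h
  · rw [Real.rpow_def_of_neg h]
    have : Real.cos (3 / 2 * Real.pi) = 0 := by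
      rw [Real.cos_eq_zero_iff]; exact ⟨1, by push_cast; ring⟩
    rw [this, mul_zero]
  · rw [h]; exact Real.zero_rpow (by norm_num)

lemma auxPhi_zero {δ t : ℝ} (hδ : 0 < δ) (h : t ≤ 1 - δ) : auxPhi δ t = 0 :=
  aux_rpow52 _ (div_nonpos_of_nonpos_of_nonneg (by linarith) hδ.le)

lemma auxDPhi_zero {δ t : ℝ} (hδ : 0 < δ) (h : t ≤ 1 - δ) : auxDPhi δ t = 0 := by
  rw [auxDPhi, aux_rpow32 _ (div_nonpos_of_nonpos_of_nonneg (by linarith) hδ.le)]; simp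

lemma auxPhi_one {δ : ℝ} (hδ : 0 < δ) : auxPhi δ 1 = 1 := by
  have : (1 - (1 - δ)) / δ = 1 := by field_simp; ring
  rw [auxPhi, this, Real.one_rpow]

lemma auxDPhi_pos {δ t : ℝ} (hδ : 0 < δ) (h : 1 - δ < t) : 0 < auxDPhi δ t := by
  have : 0 < (t - (1 - δ)) / δ := div_pos (by linarith) hδ
  have := Real.rpow_pos_of_pos this (3 / 2)
  unfold auxDPhi; positivity

lemma auxPhi_nonneg {δ t : ℝ} (hδ : 0 < δ) : 0 ≤ auxPhi δ t := by
  by_cases h : t ≤ 1 - δ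
  · rw [auxPhi_zero hδ h]
  · exact Real.rpow_nonneg (div_nonneg (by linarith) hδ.le) _

lemma auxPhi_le {δ t : ℝ} (hδ : 0 < δ) (ht : t ≤ 1) : auxPhi δ t ≤ 1 := by
  by_cases h : t ≤ 1 - δ
  · rw [auxPhi_zero hδ h]; exact zero_le_one
  · exact Real.rpow_le_one (div_nonneg (by linarith) hδ.le)
      (by rw [div_le_one hδ]; linarith) (by norm_num)

lemma auxPhi_deriv {δ : ℝ} (t : ℝ) : HasDerivAt (auxPhi δ) (auxDPhi δ t) t := by
  have h1 : HasDerivAt (fun t : ℝ => (t - (1 - δ)) / δ) (1 / δ) t :=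
    ((hasDerivAt_id t).sub_const _).div_const δ
  have h2 := (Real.hasDerivAt_rpow_const (x := (t - (1 - δ)) / δ) (p := 5 / 2)
    (Or.inr (by norm_num))).comp t h1
  refine h2.congr_deriv ?_
  rw [auxDPhi]
  norm_num
  ring

lemma auxPhi_contDiff (δ : ℝ) : ContDiff ℝ 2 (auxPhi δ) := by
  have h1 : ContDiff ℝ 2 (fun x : ℝ => x ^ (5 / 2 : ℝ)) := by
    exact_mod_cast Real.contDiff_rpow_const_of_le (n := 2) (p := 5 / 2) (by norm_num)
  have h2 : ContDiff ℝ 2 (fun t : ℝ => (t - (1 - δ)) / δ) := by fun_prop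
  exact h1.comp h2

lemma auxDPhi_contDiff (δ : ℝ) : ContDiff ℝ 1 (auxDPhi δ) := by
  have h1 : ContDiff ℝ 1 (fun x : ℝ => x ^ (3 / 2 : ℝ)) := by
    exact_mod_cast Real.contDiff_rpow_const_of_le (n := 1) (p := 3 / 2) (by norm_num)
  have h2 : ContDiff ℝ 1 (fun t : ℝ => (t - (1 - δ)) / δ) := by fun_prop
  exact ((contDiff_const (c := (5 / 2 : ℝ))).mul (h1.comp h2)).div_const δ

/-- Admissible curves from `0` to `y`. -/
def AuxAdm {d : ℕ} (γ : ℝ → Ed d) (y : Ed d) : Prop :=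
  ContDiffOn ℝ 2 γ (Set.Icc 0 1) ∧ γ 0 = 0 ∧ γ 1 = y ∧
      (∀ t ∈ Set.Icc (0:ℝ) 1, deriv γ t ≠ 0)

/-- Length of a curve. -/
def auxL {d : ℕ} (ℓ : Ed d → Ed d → ℝ) (γ : ℝ → Ed d) : ℝ :=
  ∫ t in (0:ℝ)..1, ℓ (γ t) (deriv γ t)

section Curves
variable {d : ℕ} {ℓ : Ed d → Ed d → ℝ} {γ : ℝ → Ed d} {x : Ed d}

lemma AuxAdm.diff (h : AuxAdm γ x) {t : ℝ} (ht : t ∈ Set.Icc (0:ℝ) 1) :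
    DifferentiableAt ℝ γ t := differentiableAt_of_deriv_ne_zero (h.2.2.2 t ht)

lemma AuxAdm.derivC1 (h : AuxAdm γ x) : ContDiffOn ℝ 1 (deriv γ) (Set.Icc 0 1) := by
  have h1 : ContDiffOn ℝ (1 + 1) γ (Set.Icc 0 1) := by
    have := h.1
    rwa [one_add_one_eq_two]
  have h2 := ((contDiffOn_succ_iff_derivWithin (uniqueDiffOn_Icc zero_lt_one)).1 h1).2.2
  refine h2.congr fun t ht => ?_
  exact ((h.diff ht).derivWithin (uniqueDiffOn_Icc zero_lt_one t ht)).symm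

lemma AuxAdm.tail (hcts : ∀ x : Ed d, x ≠ 0 → ∀ v,
      ContinuousAt (fun p : Ed d × Ed d => ℓ p.1 p.2) (x, v))
    (h : AuxAdm γ x) {τ : ℝ} (h0 : 0 ≤ τ) (h1 : τ ≤ 1) (hne : ∀ t ∈ Set.Icc τ 1, γ t ≠ 0) :
    IntervalIntegrable (fun t => ℓ (γ t) (deriv γ t)) MeasureTheory.volume τ 1 := by
  refine ContinuousOn.intervalIntegrable ?_
  rw [Set.uIcc_of_le h1]
  have hsub : Set.Icc τ 1 ⊆ Set.Icc (0:ℝ) 1 := Set.Icc_subset_Icc_left h0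
  intro t ht
  have h2 : ContinuousWithinAt (fun t => (γ t, deriv γ t)) (Set.Icc τ 1) t :=
    ((h.1.continuousOn.mono hsub) t ht).prodMk ((h.derivC1.continuousOn.mono hsub) t ht)
  exact ContinuousAt.comp_continuousWithinAt (f := fun t => (γ t, deriv γ t))
    (hcts (γ t) (hne t ht) (deriv γ t)) h2

lemma aux_L_nonneg (hpos : ∀ x v, 0 ≤ ℓ x v) (γ : ℝ → Ed d) : 0 ≤ auxL ℓ γ :=
  intervalIntegral.integral_nonneg zero_le_one fun _ _ => hpos _ _

/-- initial pieces are no longer than the whole, if the tail avoids zero -/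
lemma AuxAdm.init_le (hpos : ∀ x v, 0 ≤ ℓ x v) (hcts : ∀ x : Ed d, x ≠ 0 → ∀ v,
      ContinuousAt (fun p : Ed d × Ed d => ℓ p.1 p.2) (x, v))
    (h : AuxAdm γ x) {τ : ℝ} (h0 : 0 ≤ τ) (h1 : τ ≤ 1) (hne : ∀ t ∈ Set.Icc τ 1, γ t ≠ 0) :
    ∫ t in (0:ℝ)..τ, ℓ (γ t) (deriv γ t) ≤ auxL ℓ γ := by
  by_cases hi : IntervalIntegrable (fun t => ℓ (γ t) (deriv γ t)) MeasureTheory.volume 0 τ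
  · rw [auxL, ← intervalIntegral.integral_add_adjacent_intervals hi (h.tail hcts h0 h1 hne)]
    have := intervalIntegral.integral_nonneg (μ := MeasureTheory.volume)
      (f := fun t => ℓ (γ t) (deriv γ t)) h1 fun _ _ => hpos _ _
    linarith
  · rw [intervalIntegral.integral_undef hi]
    exact aux_L_nonneg hpos γ

lemma AuxAdm.truncate (hpos : ∀ x v, 0 ≤ ℓ x v) (hcts : ∀ x : Ed d, x ≠ 0 → ∀ v,
      ContinuousAt (fun p : Ed d × Ed d => ℓ p.1 p.2) (x, v))
    (hhom : ∀ (x : Ed d) (c : ℝ) v, 0 ≤ c → ℓ x (c • v) = c * ℓ x v)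
    (h : AuxAdm γ x) {τ : ℝ} (h0 : 0 < τ) (h1 : τ ≤ 1) (hne : ∀ t ∈ Set.Icc τ 1, γ t ≠ 0) :
    ∃ σ, AuxAdm σ (γ τ) ∧ auxL ℓ σ ≤ auxL ℓ γ := by
  have hd : ∀ t ∈ Set.Icc (0:ℝ) 1,
      HasDerivAt (fun t => γ (τ * t)) (τ • deriv γ (τ * t)) t := by
    intro t ht
    have hm : τ * t ∈ Set.Icc (0:ℝ) 1 :=
      ⟨mul_nonneg h0.le ht.1, mul_le_one₀ h1 ht.1 ht.2⟩
    have h2 : HasDerivAt (fun t : ℝ => τ * t) τ t := by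
      simpa using (hasDerivAt_id t).const_mul τ
    exact (h.diff hm).hasDerivAt.scomp t h2
  refine ⟨fun t => γ (τ * t), ⟨?_, ?_, ?_, ?_⟩, ?_⟩
  · refine h.1.comp (g := γ) (f := fun t : ℝ => τ * t) (by fun_prop) ?_
    intro t ht
    exact ⟨mul_nonneg h0.le ht.1, mul_le_one₀ h1 ht.1 ht.2⟩
  · simp [h.2.1]
  · simp
  · intro t ht
    rw [(hd t ht).deriv]
    exact smul_ne_zero h0.ne' (h.2.2.2 _ ⟨mul_nonneg h0.le ht.1, mul_le_one₀ h1 ht.1 ht.2⟩)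
  · have e : auxL ℓ (fun t => γ (τ * t)) = ∫ t in (0:ℝ)..τ, ℓ (γ t) (deriv γ t) := by
      have h3 := intervalIntegral.mul_integral_comp_mul_left (a := 0) (b := 1)
        (f := fun t => ℓ (γ t) (deriv γ t)) (c := τ)
      rw [mul_zero, mul_one, ← intervalIntegral.integral_const_mul] at h3
      rw [← h3, auxL]
      refine intervalIntegral.integral_congr fun t ht => ?_
      rw [Set.uIcc_of_le zero_le_one] at ht
      show ℓ (γ (τ * t)) (deriv (fun t => γ (τ * t)) t) = τ * ℓ (γ (τ * t)) (deriv γ (τ * t))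
      rw [(hd t ht).deriv, hhom _ _ _ h0.le]
    rw [e]
    exact h.init_le hpos hcts h0.le h1 hne

lemma AuxAdm.perturb (hpos : ∀ x v, 0 ≤ ℓ x v) (hcts : ∀ x : Ed d, x ≠ 0 → ∀ v,
      ContinuousAt (fun p : Ed d × Ed d => ℓ p.1 p.2) (x, v))
    (hhom : ∀ (x : Ed d) (c : ℝ) v, 0 ≤ c → ℓ x (c • v) = c * ℓ x v)
    (hsub : ∀ (x u v : Ed d), ℓ x (u + v) ≤ ℓ x u + ℓ x v)
    {r R M B δ : ℝ} (hR : 0 ≤ R) (hB : 0 ≤ B)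
    (hball : ∀ y ∈ Metric.ball x r, y ≠ 0 ∧ ∀ u, ℓ y u ≤ R * ‖u‖)
    (h : AuxAdm γ x) (hδ : 0 < δ) (hδ1 : δ < 1)
    (hγ : ∀ t ∈ Set.Icc (1 - δ) 1, γ t ∈ Metric.ball x (r / 2) ∧ ‖deriv γ t‖ ≤ M)
    (w : Ed d) (hw : ‖w‖ < r / 2) (hwB : ∀ y ∈ Metric.ball x r, ℓ y w ≤ B)
    (hnv : ∀ t ∈ Set.Ioc (1 - δ) 1, deriv γ t + auxDPhi δ t • w ≠ 0) :
    ∃ σ, AuxAdm σ (x + w) ∧ auxL ℓ σ ≤ auxL ℓ γ + δ * (R * M) + B := by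
  have hr : 0 < r := by have := norm_nonneg w; linarith
  have hd : ∀ t ∈ Set.Icc (0:ℝ) 1,
      HasDerivAt (fun t => γ t + auxPhi δ t • w) (deriv γ t + auxDPhi δ t • w) t :=
    fun t ht => (h.diff ht).hasDerivAt.add ((auxPhi_deriv t).smul_const w)
  have hM : 0 ≤ M := (norm_nonneg _).trans (hγ 1 ⟨by linarith, le_rfl⟩).2
  have hne : ∀ t ∈ Set.Icc (1 - δ) 1, γ t ≠ 0 := fun t ht =>
    (hball _ (Metric.ball_subset_ball (by linarith) (hγ t ht).1)).1
  refine ⟨fun t => γ t + auxPhi δ t • w, ⟨?_, ?_, ?_, ?_⟩, ?_⟩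
  · exact h.1.add ((auxPhi_contDiff δ).smul contDiff_const).contDiffOn
  · simp [h.2.1, auxPhi_zero hδ (show (0:ℝ) ≤ 1 - δ by linarith)]
  · simp [h.2.2.1, auxPhi_one hδ]
  · intro t ht
    rw [(hd t ht).deriv]
    by_cases h1 : t ≤ 1 - δ
    · rw [auxDPhi_zero hδ h1]
      simpa using h.2.2.2 t ht
    · exact hnv t ⟨not_le.1 h1, ht.2⟩
  · set σ := fun t => γ t + auxPhi δ t • w with hσ
    have hX : 0 ≤ δ * (R * M) := by positivity
    by_cases hi : IntervalIntegrable (fun t => ℓ (σ t) (deriv σ t)) MeasureTheory.volume 0 1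
    swap
    · rw [auxL, intervalIntegral.integral_undef hi]
      have := aux_L_nonneg hpos γ
      linarith
    have i1 : IntervalIntegrable (fun t => ℓ (σ t) (deriv σ t)) MeasureTheory.volume 0 (1 - δ) :=
      hi.mono_set (by
        rw [Set.uIcc_of_le (by linarith), Set.uIcc_of_le zero_le_one]
        exact Set.Icc_subset_Icc_right (by linarith))
    have i2 : IntervalIntegrable (fun t => ℓ (σ t) (deriv σ t)) MeasureTheory.volume (1 - δ) 1 :=
      hi.mono_set (by
        rw [Set.uIcc_of_le (by linarith), Set.uIcc_of_le zero_le_one]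
        exact Set.Icc_subset_Icc_left (by linarith))
    rw [auxL, ← intervalIntegral.integral_add_adjacent_intervals i1 i2, add_assoc]
    refine add_le_add ?_ ?_
    · refine le_trans (le_of_eq ?_) (h.init_le hpos hcts (τ := 1 - δ) (by linarith) (by linarith) hne)
      refine intervalIntegral.integral_congr fun t ht => ?_
      rw [Set.uIcc_of_le (by linarith)] at ht
      show ℓ (γ t + auxPhi δ t • w) (deriv σ t) = ℓ (γ t) (deriv γ t)
      rw [(hd t ⟨ht.1, by linarith [ht.2]⟩).deriv, auxDPhi_zero hδ ht.2, auxPhi_zero hδ ht.2]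
      simp
    · have hcD : Continuous (auxDPhi δ) := (auxDPhi_contDiff δ).continuous
      have e : ∫ t in (1 - δ)..1, (R * M + auxDPhi δ t * B) = δ * (R * M) + B := by
        have j1 : IntervalIntegrable (fun t => auxDPhi δ t * B) MeasureTheory.volume (1 - δ) 1 :=
          (hcD.mul continuous_const).intervalIntegrable _ _
        have j2 : IntervalIntegrable (fun _ : ℝ => R * M) MeasureTheory.volume (1 - δ) 1 :=
          continuous_const.intervalIntegrable _ _
        rw [intervalIntegral.integral_add j2 j1, intervalIntegral.integral_mul_const B,
          intervalIntegral.integral_eq_sub_of_hasDerivAt (fun t _ => auxPhi_deriv t)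
          (hcD.intervalIntegrable _ _), auxPhi_one hδ, auxPhi_zero hδ le_rfl]
        simp
        ring
      rw [← e]
      refine intervalIntegral.integral_mono_on (by linarith) i2
        ((continuous_const.add (hcD.mul continuous_const)).intervalIntegrable _ _) ?_
      intro t ht
      have ht0 : t ∈ Set.Icc (0:ℝ) 1 := ⟨by linarith [ht.1], ht.2⟩
      rw [(hd t ht0).deriv]
      have hmem : σ t ∈ Metric.ball x r := by
        have h1 := (hγ t ht).1
        rw [mem_ball_iff_norm] at h1 ⊢
        have h2 : σ t - x = (γ t - x) + auxPhi δ t • w := by simp only [hσ]; abel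
        have h3 : ‖auxPhi δ t • w‖ ≤ ‖w‖ := by
          rw [norm_smul, Real.norm_eq_abs, abs_of_nonneg (auxPhi_nonneg hδ)]
          exact mul_le_of_le_one_left (norm_nonneg _) (auxPhi_le hδ ht.2)
        rw [h2]
        refine (norm_add_le _ _).trans_lt ?_
        linarith
      have hDn : 0 ≤ auxDPhi δ t := by
        rcases ht.1.eq_or_lt with h4 | h4
        · rw [auxDPhi_zero hδ h4.symm.le]
        · exact (auxDPhi_pos hδ h4).le
      refine (hsub _ _ _).trans (add_le_add ?_ ?_)
      · exact ((hball _ hmem).2 _).trans (mul_le_mul_of_nonneg_left (hγ t ht).2 hR)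
      · rw [hhom _ _ _ hDn]
        exact mul_le_mul_of_nonneg_left (hwB _ hmem) hDn

end Curves

section Fin1
variable {γ : ℝ → Ed 1} {x : Ed 1}

lemma aux_hasDeriv0 (h : AuxAdm γ x) {t : ℝ} (ht : t ∈ Set.Icc (0:ℝ) 1) :
    HasDerivAt (fun t => γ t 0) (deriv γ t 0) t := by
  have h1 := (h.diff ht).hasDerivAt
  have h2 := (EuclideanSpace.proj (0 : Fin 1) : Ed 1 →L[ℝ] ℝ).hasFDerivAt (x := γ t)
  exact h2.comp_hasDerivAt t h1

lemma aux_ext1 {u v : Ed 1} (h : u 0 = v 0) : u = v := by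
  ext i
  rw [Subsingleton.elim i 0]
  exact h

lemma aux_sign (h : AuxAdm γ x) (hx : x 0 ≠ 0) : ∀ t ∈ Set.Icc (0:ℝ) 1,
    0 < deriv γ t 0 * x 0 := by
  have hc : ContinuousOn (fun t => γ t 0) (Set.Icc 0 1) := fun t ht =>
    (aux_hasDeriv0 h ht).continuousAt.continuousWithinAt
  obtain ⟨c, hc1, hc2⟩ := exists_hasDerivAt_eq_slope (fun t => γ t 0) (fun t => deriv γ t 0)
    zero_lt_one hc (fun t ht => aux_hasDeriv0 h (Set.Ioo_subset_Icc_self ht))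
  have hc3 : deriv γ c 0 = x 0 := by simpa [h.2.1, h.2.2.1] using hc2
  have hdc : ContinuousOn (fun t => deriv γ t 0 * x 0) (Set.Icc 0 1) := by
    have h1 : ContinuousOn (fun t => deriv γ t 0) (Set.Icc 0 1) :=
      (EuclideanSpace.proj (0 : Fin 1) : Ed 1 →L[ℝ] ℝ).continuous.comp_continuousOn
        h.derivC1.continuousOn
    exact h1.mul continuousOn_const
  intro t ht
  by_contra hcon
  have h2 := isPreconnected_Icc.intermediate_value ht (Set.Ioo_subset_Icc_self hc1) hdc
  have h3 : (0:ℝ) ∈ Set.Icc (deriv γ t 0 * x 0) (deriv γ c 0 * x 0) :=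
    ⟨not_lt.1 hcon, by rw [hc3]; exact mul_self_nonneg _⟩
  obtain ⟨s, hs, hs0⟩ := h2 h3
  refine h.2.2.2 s hs (aux_ext1 ?_)
  simpa [hx] using hs0

lemma aux_trunc1 (h : AuxAdm γ x) (hx : x 0 ≠ 0) {θ : ℝ} (h0 : 0 < θ) (h1 : θ < 1) :
    ∃ τ, 0 < τ ∧ τ ≤ 1 ∧ γ τ = θ • x ∧ ∀ t ∈ Set.Icc τ 1, γ t ≠ 0 := by
  have hc : ContinuousOn (fun t => γ t 0 * x 0) (Set.Icc 0 1) := fun t ht =>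
    ((aux_hasDeriv0 h ht).mul_const (x 0)).continuousAt.continuousWithinAt
  have hxx : 0 < x 0 * x 0 := mul_self_pos.2 hx
  have hmono : StrictMonoOn (fun t => γ t 0 * x 0) (Set.Icc 0 1) := by
    refine strictMonoOn_of_deriv_pos (convex_Icc 0 1) hc fun t ht => ?_
    rw [interior_Icc] at ht
    have ht' := Set.Ioo_subset_Icc_self ht
    rw [((aux_hasDeriv0 h ht').mul_const (x 0)).deriv]
    exact aux_sign h hx t ht'
  have hm : θ * (x 0 * x 0) ∈ Set.Icc (γ 0 0 * x 0) (γ 1 0 * x 0) := by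
    rw [h.2.1, h.2.2.1]
    simp only [PiLp.zero_apply, zero_mul]
    exact ⟨by positivity, by nlinarith⟩
  obtain ⟨τ, hτ, hτe⟩ := intermediate_value_Icc zero_le_one hc hm
  simp only at hτe
  refine ⟨τ, ?_, hτ.2, ?_, ?_⟩
  · rcases hτ.1.eq_or_lt with h2 | h2
    · rw [← h2, h.2.1] at hτe
      simp at hτe
      rcases hτe with h3 | h3
      · exact absurd h3 h0.ne'
      · exact absurd h3 hx
    · exact h2
  · refine aux_ext1 (mul_right_cancel₀ hx ?_)
    rw [hτe]
    simp [mul_assoc]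
  · intro t ht h3
    have h4 := hmono.monotoneOn hτ (⟨hτ.1.trans ht.1, ht.2⟩ : t ∈ Set.Icc (0:ℝ) 1) ht.1
    simp only [h3, hτe, PiLp.zero_apply, zero_mul] at h4
    have : 0 < θ * (x 0 * x 0) := by positivity
    linarith
end Fin1

lemma aux_dense {d : ℕ} {γ : ℝ → Ed d} {x : Ed d} (hd : 2 ≤ d) (h : AuxAdm γ x) {δ : ℝ}
    (hδ : 0 < δ) (hδ1 : δ < 1) (u : Ed d) {ρ : ℝ} (hρ : 0 < ρ) :
    ∃ w, ‖w - u‖ < ρ ∧ ∀ t ∈ Set.Ioc (1 - δ) 1, deriv γ t + auxDPhi δ t • w ≠ 0 := by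
  have h1 : ContDiffOn ℝ 1 (fun t => -((auxDPhi δ t)⁻¹ • deriv γ t)) (Set.Ioc (1 - δ) 1) := by
    refine ContDiffOn.neg (f := fun t => (auxDPhi δ t)⁻¹ • deriv γ t)
      (ContDiffOn.smul (f := fun t => (auxDPhi δ t)⁻¹) ?_ (h.derivC1.mono ?_))
    · exact (auxDPhi_contDiff δ).contDiffOn.inv fun t ht => (auxDPhi_pos hδ ht.1).ne'
    · intro t ht
      exact ⟨by linarith [ht.1], ht.2⟩
  have h2 := h1.dense_compl_image_of_dimH_lt_finrank (convex_Ioc _ _) subset_rfl (by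
    refine (dimH_mono (Set.subset_univ _)).trans_lt ?_
    rw [Real.dimH_univ, finrank_euclideanSpace_fin]
    exact_mod_cast hd)
  obtain ⟨w, hw1, hw2⟩ := h2.exists_dist_lt u hρ
  refine ⟨w, by rwa [dist_comm, dist_eq_norm] at hw2, fun t ht hcon => hw1 ⟨t, ht, ?_⟩⟩
  have hp := (auxDPhi_pos hδ ht.1).ne'
  have : deriv γ t = -(auxDPhi δ t • w) := eq_neg_of_add_eq_zero_left hcon
  simp only [this, smul_neg, neg_neg, smul_smul, inv_mul_cancel₀ hp, one_smul]

lemma aux_dir {d : ℕ} {f : Ed d → ℝ} {ξ x v : Ed d} {l : ℝ} (hf : HasGradientAt f ξ x)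
    (hyp : ∀ κ : ℝ, 0 < κ → ∀ᶠ ε : ℝ in nhdsWithin 0 (Set.Ioi 0),
      ∃ w, ‖w - ε • v‖ ≤ κ * ε ∧ f (x + w) ≤ f x + ε * (l + κ)) : ⟪ξ, v⟫ ≤ l := by
  have main : ∀ κ : ℝ, 0 < κ → ⟪ξ, v⟫ ≤ l + κ * (1 + ‖v‖ + κ + ‖ξ‖) := by
    intro κ hκ
    have h1 := (hasFDerivAt_iff_isLittleO_nhds_zero.1 hf.hasFDerivAt).def hκ
    obtain ⟨s, hs, hball⟩ := Metric.eventually_nhds_iff_ball.1 h1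
    have h2 : ∀ᶠ ε : ℝ in nhdsWithin 0 (Set.Ioi 0), ε * (‖v‖ + κ) < s := by
      have : Continuous (fun ε : ℝ => ε * (‖v‖ + κ)) := by fun_prop
      exact ((this.tendsto 0).eventually (gt_mem_nhds (by simpa using hs))).filter_mono
        nhdsWithin_le_nhds
    obtain ⟨ε, ⟨⟨w, hw1, hw2⟩, h3⟩, h4⟩ := (((hyp κ hκ).and h2).and
      (self_mem_nhdsWithin (a := (0:ℝ)) (s := Set.Ioi 0))).exists
    have hε : 0 < ε := h4
    have h5 : ‖w‖ ≤ ε * (‖v‖ + κ) := by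
      have : w = ε • v + (w - ε • v) := by abel
      rw [this]
      refine (norm_add_le _ _).trans ?_
      rw [norm_smul, Real.norm_eq_abs, abs_of_pos hε]
      linarith
    have h6 := hball w (by simpa using h5.trans_lt h3)
    rw [InnerProductSpace.toDual_apply_apply, Real.norm_eq_abs] at h6
    have h7 := (abs_le.1 h6).1
    have h8 : ε * ⟪ξ, v⟫ ≤ ⟪ξ, w⟫ + ‖ξ‖ * (κ * ε) := by
      have e1 : ⟪ξ, w⟫ = ε * ⟪ξ, v⟫ + ⟪ξ, w - ε • v⟫ := by
        rw [inner_sub_right, inner_smul_right]; ring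
      have e2 := (abs_le.1 (abs_real_inner_le_norm ξ (w - ε • v))).1
      have e3 := mul_le_mul_of_nonneg_left hw1 (norm_nonneg ξ)
      linarith
    have h9 := mul_le_mul_of_nonneg_left h5 hκ.le
    have h10 : ε * ⟪ξ, v⟫ ≤ ε * (l + κ * (1 + ‖v‖ + κ + ‖ξ‖)) := by nlinarith
    exact le_of_mul_le_mul_left h10 hε
  have hlim : Filter.Tendsto (fun κ : ℝ => l + κ * (1 + ‖v‖ + κ + ‖ξ‖))
      (nhdsWithin 0 (Set.Ioi 0)) (nhds l) := by
    have : Continuous (fun κ : ℝ => l + κ * (1 + ‖v‖ + κ + ‖ξ‖)) := by fun_prop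
    simpa using (this.tendsto 0).mono_left nhdsWithin_le_nhds
  refine ge_of_tendsto hlim ?_
  filter_upwards [self_mem_nhdsWithin] with κ hκ using main κ hκ

lemma aux_key {d : ℕ} {ℓ : Ed d → Ed d → ℝ} {x : Ed d}
    (hpos : ∀ x v, 0 ≤ ℓ x v) (hcts : ∀ x : Ed d, x ≠ 0 → ∀ v,
      ContinuousAt (fun p : Ed d × Ed d => ℓ p.1 p.2) (x, v))
    (hhom : ∀ (x : Ed d) (c : ℝ) v, 0 ≤ c → ℓ x (c • v) = c * ℓ x v)
    (hsub : ∀ (x u v : Ed d), ℓ x (u + v) ≤ ℓ x u + ℓ x v)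
    {r R : ℝ} (hr : 0 < r) (hR : 0 < R)
    (hball : ∀ y ∈ Metric.ball x r, y ≠ 0 ∧ ∀ u, ℓ y u ≤ R * ‖u‖)
    (hx : x ≠ 0) (v : Ed d) (hv : v ≠ 0) (κ : ℝ) (hκ : 0 < κ) :
    ∀ᶠ ε : ℝ in nhdsWithin 0 (Set.Ioi 0), ∀ γ, AuxAdm γ x → ∃ w σ,
      ‖w - ε • v‖ ≤ κ * ε ∧ AuxAdm σ (x + w) ∧ auxL ℓ σ ≤ auxL ℓ γ + ε * (ℓ x v + κ) := by
  -- shrink the ball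
  have hc1 : ContinuousAt (fun y => ℓ y v) x :=
    ContinuousAt.comp (g := fun p : Ed d × Ed d => ℓ p.1 p.2) (f := fun y => (y, v))
      (hcts x hx v) (by fun_prop)
  obtain ⟨s, hs, hsb⟩ := Metric.eventually_nhds_iff_ball.1
    (hc1.eventually (gt_mem_nhds (show ℓ x v < ℓ x v + κ / 4 by linarith)))
  set r1 := min r s with hr1
  have hr1p : 0 < r1 := lt_min hr hs
  have hball1 : ∀ y ∈ Metric.ball x r1, y ≠ 0 ∧ ∀ u, ℓ y u ≤ R * ‖u‖ := fun y hy =>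
    hball y (Metric.ball_subset_ball (min_le_left _ _) hy)
  have hb2 : ∀ y ∈ Metric.ball x r1, ℓ y v ≤ ℓ x v + κ / 4 := fun y hy =>
    (hsb y (Metric.ball_subset_ball (min_le_right _ _) hy)).le
  set k := min κ (κ / (4 * R)) with hk
  have hkp : 0 < k := lt_min hκ (by positivity)
  have hkR : R * k ≤ κ / 4 := by
    have : k ≤ κ / (4 * R) := min_le_right _ _
    calc R * k ≤ R * (κ / (4 * R)) := mul_le_mul_of_nonneg_left this hR.le
      _ = κ / 4 := by field_simp
  have ev1 : ∀ᶠ ε : ℝ in nhdsWithin 0 (Set.Ioi 0), ε * (‖v‖ + k) < r1 / 2 := by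
    have : Continuous (fun ε : ℝ => ε * (‖v‖ + k)) := by fun_prop
    exact ((this.tendsto 0).eventually (gt_mem_nhds (by simpa using hr1p))).filter_mono
      nhdsWithin_le_nhds
  have ev2 : ∀ᶠ ε : ℝ in nhdsWithin 0 (Set.Ioi 0), ε * ‖v‖ < ‖x‖ := by
    have : Continuous (fun ε : ℝ => ε * ‖v‖) := by fun_prop
    exact ((this.tendsto 0).eventually (gt_mem_nhds (by simpa using hx))).filter_mono
      nhdsWithin_le_nhds
  filter_upwards [ev1, ev2, self_mem_nhdsWithin] with ε he1 he2 he3 γ hγ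
  have hε : 0 < ε := he3
  have hlx := hpos x v
  -- bound on the derivative
  obtain ⟨M, hM⟩ := isCompact_Icc.exists_bound_of_continuousOn hγ.derivC1.continuousOn
  have hM0 : 0 ≤ M := (norm_nonneg _).trans (hM 0 (by simp))
  -- choice of δ
  have hγ1 : ∃ δ0 > 0, ∀ t ∈ Set.Icc (0:ℝ) 1, dist t 1 < δ0 → dist (γ t) x < r1 / 2 := by
    have := Metric.continuousWithinAt_iff.1
      (hγ.1.continuousOn 1 (by simp)) (r1 / 2) (by positivity)
    obtain ⟨δ0, h1, h2⟩ := this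
    rw [hγ.2.2.1] at h2
    exact ⟨δ0, h1, fun t ht h3 => h2 ht h3⟩
  obtain ⟨δ0, hδ0, hδ0'⟩ := hγ1
  obtain ⟨δ, hδ, hδ1, hδ2, hδ3⟩ : ∃ δ : ℝ, 0 < δ ∧ δ < 1 ∧ δ < δ0 ∧
      δ * (R * M) ≤ ε * (κ / 2) := by
    refine ⟨min (min (1/2) (δ0/2)) (ε * (κ / 2) / (R * M + 1)), ?_, ?_, ?_, ?_⟩
    · have : 0 < ε * (κ / 2) / (R * M + 1) := by positivity
      exact lt_min (lt_min (by norm_num) (by linarith)) this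
    · refine lt_of_le_of_lt ((min_le_left _ _).trans (min_le_left _ _)) (by norm_num)
    · refine lt_of_le_of_lt ((min_le_left _ _).trans (min_le_right _ _)) (by linarith)
    · have h1 : 0 ≤ R * M := by positivity
      calc _ ≤ (ε * (κ / 2) / (R * M + 1)) * (R * M) :=
            mul_le_mul_of_nonneg_right (min_le_right _ _) h1
        _ ≤ (ε * (κ / 2) / (R * M + 1)) * (R * M + 1) :=
            mul_le_mul_of_nonneg_left (by linarith) (by positivity)
        _ = _ := by field_simp
  have hγ2 : ∀ t ∈ Set.Icc (1 - δ) 1, γ t ∈ Metric.ball x (r1 / 2) ∧ ‖deriv γ t‖ ≤ M := by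
    intro t ht
    have ht' : t ∈ Set.Icc (0:ℝ) 1 := ⟨by linarith [ht.1], ht.2⟩
    refine ⟨hδ0' t ht' ?_, hM t ht'⟩
    rw [Real.dist_eq, abs_lt]
    exact ⟨by linarith [ht.1], by linarith [ht.2]⟩
  -- the perturbation statement
  have pert : ∀ w : Ed d, ‖w - ε • v‖ ≤ k * ε →
      (∀ t ∈ Set.Ioc (1 - δ) 1, deriv γ t + auxDPhi δ t • w ≠ 0) → ∃ w σ,
      ‖w - ε • v‖ ≤ κ * ε ∧ AuxAdm σ (x + w) ∧ auxL ℓ σ ≤ auxL ℓ γ + ε * (ℓ x v + κ) := by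
    intro w hw hnv
    have hwe : w = ε • v + (w - ε • v) := by abel
    have hwn : ‖w‖ < r1 / 2 := by
      rw [hwe]
      refine (norm_add_le _ _).trans_lt ?_
      rw [norm_smul, Real.norm_eq_abs, abs_of_pos hε]
      linarith
    obtain ⟨σ, h1, h2⟩ := hγ.perturb hpos hcts hhom hsub hR.le
      (B := ε * (ℓ x v + κ / 2)) (by positivity) hball1 hδ hδ1 hγ2 w hwn (by
        intro y hy
        rw [hwe]
        refine (hsub _ _ _).trans ?_
        rw [hhom _ _ _ hε.le]
        have h3 := mul_le_mul_of_nonneg_left (hb2 y hy) hε.le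
        have h4 := (hball1 y hy).2 (w - ε • v)
        have h5 := mul_le_mul_of_nonneg_left hw hR.le
        have h6 := mul_le_mul_of_nonneg_right hkR hε.le
        linarith) hnv
    refine ⟨w, σ, hw.trans (mul_le_mul_of_nonneg_right (min_le_left _ _) hε.le), h1, ?_⟩
    linarith
  rcases lt_or_ge 1 d with hd | hd
  · obtain ⟨w, hw1, hw2⟩ := aux_dense hd hγ hδ hδ1 (ε • v) (mul_pos hkp hε)
    exact pert w hw1.le hw2
  · have hd1 : d = 1 := by
      rcases Nat.lt_or_ge d 1 with h | h
      · obtain rfl : d = 0 := by omega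
        exact absurd (Subsingleton.elim x 0) hx
      · omega
    subst hd1
    have hx0 : x 0 ≠ 0 := fun h => hx (aux_ext1 h)
    have hv0 : v 0 ≠ 0 := fun h => hv (aux_ext1 h)
    have hvs : v = (v 0 / x 0) • x := aux_ext1 (by simp; field_simp)
    set q := v 0 / x 0 with hq
    have hq0 : q ≠ 0 := div_ne_zero hv0 hx0
    rcases lt_or_gt_of_ne hq0 with hneg | hposq
    · have h1 : ε * |q| < 1 := by
        have hxn : 0 < ‖x‖ := norm_pos_iff.2 hx
        rw [hvs, norm_smul, Real.norm_eq_abs] at he2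
        by_contra hcon
        have := mul_le_mul_of_nonneg_right (not_lt.1 hcon) hxn.le
        linarith
      rw [abs_of_neg hneg] at h1
      have h2 : ε * q < 0 := mul_neg_of_pos_of_neg hε hneg
      obtain ⟨τ, ht0, ht1, hte, htn⟩ := aux_trunc1 hγ hx0 (θ := 1 + ε * q) (by linarith)
        (by linarith)
      obtain ⟨σ, hσ1, hσ2⟩ := hγ.truncate hpos hcts hhom ht0 ht1 htn
      refine ⟨ε • v, σ, by simp; positivity, ?_, ?_⟩
      · rw [hte] at hσ1
        have : x + ε • v = (1 + ε * q) • x := by rw [hvs]; module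
        rwa [this]
      · have : 0 ≤ ε * (ℓ x v + κ) := by positivity
        linarith
    · refine pert (ε • v) (by simp; positivity) ?_
      intro t ht hcon
      have h1 := aux_sign hγ hx0 t ⟨by linarith [ht.1], ht.2⟩
      have h2 : (deriv γ t + auxDPhi δ t • ε • v) 0 = 0 := by rw [hcon]; rfl
      rw [hvs] at h2
      simp only [PiLp.add_apply, PiLp.smul_apply, smul_eq_mul] at h2
      have h3 := auxDPhi_pos hδ ht.1
      have h4 : 0 < auxDPhi δ t * (ε * (q * (x 0 * x 0))) := by
        have := mul_self_pos.2 hx0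
        positivity
      have h5 : (deriv γ t 0 + auxDPhi δ t * (ε * (q * x 0))) * x 0 = 0 := by rw [h2, zero_mul]
      linarith

/-- Theorem 1.5, eikonal inequality: at every point `x ≠ 0` where the Finsler distance
`d⁰(x) = d_ℓ(0,x)` is differentiable, `h̃₀(x, ∇d⁰(x)) ≤ 0`; in particular (since `d⁰` is
locally Lipschitz) the inequality holds almost everywhere in `ℝ^d`. -/
theorem stmt14 (d : ℕ) (a : (Fin d → ℤ) → Ed d → ℝ) (V₀ : Ed d → ℝ)
    (hsm : ∀ η : Fin d → ℤ, ContDiff ℝ (⊤ : ℕ∞) (a η))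
    (hneg : ∀ η : Fin d → ℤ, η ≠ 0 → ∀ x : Ed d, a η x ≤ 0)
    (heven : ∀ (η : Fin d → ℤ) (x : Ed d), a η x = a (-η) x)
    (hzero : ∀ x : Ed d, HasSum (fun η : Fin d → ℤ => a η x) 0)
    (hspan : ∀ x : Ed d,
      Submodule.span ℝ {w : Ed d | ∃ η : Fin d → ℤ, a η x < 0 ∧ w = zv η} = ⊤)
    (hdecay : ∀ c : ℝ, 0 < c → ∀ K : Set (Ed d), IsCompact K → ∀ n : ℕ,
      ∃ M : (Fin d → ℤ) → ℝ,
        (∀ η : Fin d → ℤ, ∀ x ∈ K, ‖iteratedFDeriv ℝ n (a η) x‖ ≤ M η) ∧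
        Summable (fun η : Fin d → ℤ => Real.exp (c * ‖zv η‖) * M η))
    (hVsm : ContDiff ℝ (⊤ : ℕ∞) V₀)
    (hVpos : ∀ x : Ed d, 0 ≤ V₀ x)
    (hVzero : ∀ x : Ed d, V₀ x = 0 ↔ x = 0)
    (hVnd : ∀ v : Ed d, v ≠ 0 → 0 < iteratedFDeriv ℝ 2 V₀ 0 ![v, v])
    (h0 : Ed d → Ed d → ℝ)
    (hh0 : ∀ x ξ : Ed d,
      h0 x ξ = -(∑' η : Fin d → ℤ, a η x * Real.cosh ⟪zv η, ξ⟫) - V₀ x)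
    (ξh : Ed d → Ed d → Ed d)
    (hξh1 : ∀ x v : Ed d, gradient (h0 x) (ξh x v) = v)
    (hξh2 : ∀ x ξ : Ed d, ξh x (gradient (h0 x) ξ) = ξ)
    (lam : Ed d → Ed d → ℝ)
    (hlam : ∀ x : Ed d, x ≠ 0 → ∀ v : Ed d, v ≠ 0 →
      0 < lam x v ∧ h0 x (ξh x (lam x v • v)) = 0)
    (ℓ : Ed d → Ed d → ℝ)
    (hℓ : ∀ x v : Ed d,
      ℓ x v = if x = 0 ∨ v = 0 then 0 else ⟪ξh x (lam x v • v), v⟫)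
    (dl : Ed d → Ed d → ℝ)
    (hdl : ∀ x y : Ed d, dl x y = sInf {L : ℝ | ∃ γ : ℝ → Ed d,
      ContDiffOn ℝ 2 γ (Set.Icc 0 1) ∧ γ 0 = x ∧ γ 1 = y ∧
      (∀ t ∈ Set.Icc (0:ℝ) 1, deriv γ t ≠ 0) ∧
      L = ∫ t in (0:ℝ)..1, ℓ (γ t) (deriv γ t)}) :
    (∀ x : Ed d, x ≠ 0 → ∀ ξ : Ed d,
        HasGradientAt (fun y : Ed d => dl 0 y) ξ x → h0 x ξ ≤ 0)
    ∧ ∀ᵐ x : Ed d ∂MeasureTheory.volume,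
        h0 x (gradient (fun y : Ed d => dl 0 y) x) ≤ 0 := by
  have hc := aux_conv hneg hdecay h0 hh0
  have hd := aux_diff hdecay h0 hh0
  have hcont := aux_cont hsm hdecay hVsm h0 hh0
  have hz : ∀ x, h0 x 0 = -V₀ x := by
    intro x
    rw [hh0]
    simp [(hzero x).tsum_eq]
  have hz1 : ∀ x, h0 x 0 ≤ 0 := fun x => by rw [hz]; linarith [hVpos x]
  have hz2 : ∀ x, x ≠ 0 → h0 x 0 < 0 := fun x hx => by
    rw [hz]
    have := lt_of_le_of_ne (hVpos x) (fun h => hx ((hVzero x).1 h.symm))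
    linarith
  have hloc := aux_loc hc hd hcont hz1 ξh hξh1
  have hsupp := aux_supp hc hd hz1 ξh hξh1 lam hlam hℓ
  have hcts := aux_ell_cont hc hcont hz2 hloc hsupp
  have hℓ0 : ∀ v, ℓ 0 v = 0 := fun v => by simp [hℓ]
  have hpos : ∀ x v, 0 ≤ ℓ x v := by
    intro x v
    by_cases hx : x = 0
    · rw [hx, hℓ0]
    · simpa using (hsupp x hx v).1 0 (hz1 x)
  have hhom : ∀ (x : Ed d) (c : ℝ) v, 0 ≤ c → ℓ x (c • v) = c * ℓ x v := by
    intro x c v hcn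
    by_cases hx : x = 0
    · rw [hx, hℓ0, hℓ0, mul_zero]
    · apply le_antisymm
      · obtain ⟨ξ, h1, h2⟩ := (hsupp x hx (c • v)).2
        rw [h2, inner_smul_right]
        exact mul_le_mul_of_nonneg_left ((hsupp x hx v).1 ξ h1) hcn
      · obtain ⟨ξ, h1, h2⟩ := (hsupp x hx v).2
        rw [h2, ← inner_smul_right]
        exact (hsupp x hx (c • v)).1 ξ h1
  have hsub : ∀ (x u v : Ed d), ℓ x (u + v) ≤ ℓ x u + ℓ x v := by
    intro x u v
    by_cases hx : x = 0
    · rw [hx, hℓ0, hℓ0, hℓ0, add_zero]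
    · obtain ⟨ξ, h1, h2⟩ := (hsupp x hx (u + v)).2
      rw [h2, inner_add_right]
      exact add_le_add ((hsupp x hx u).1 ξ h1) ((hsupp x hx v).1 ξ h1)
  have hdl' : ∀ y : Ed d, dl 0 y = sInf {L : ℝ | ∃ γ, AuxAdm γ y ∧ L = auxL ℓ γ} := by
    intro y
    rw [hdl]
    congr 1
    ext L
    simp only [AuxAdm, auxL, Set.mem_ofPred_eq, and_assoc]
  have hdl_le : ∀ (y : Ed d) γ, AuxAdm γ y → dl 0 y ≤ auxL ℓ γ := by
    intro y γ hγ
    rw [hdl']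
    refine csInf_le ⟨0, ?_⟩ ⟨γ, hγ, rfl⟩
    rintro L ⟨γ', _, rfl⟩
    exact aux_L_nonneg hpos γ'
  have main : ∀ x : Ed d, x ≠ 0 → ∀ ξ : Ed d,
        HasGradientAt (fun y : Ed d => dl 0 y) ξ x → h0 x ξ ≤ 0 := by
    intro x hx ξ hξ
    have hdir : ∀ v, v ≠ 0 → ⟪ξ, v⟫ ≤ ℓ x v := by
      intro v hv
      refine aux_dir hξ fun κ hκ => ?_
      obtain ⟨r, hr, R, hR, hball⟩ := hloc x hx
      have hball' : ∀ y ∈ Metric.ball x r, y ≠ 0 ∧ ∀ u, ℓ y u ≤ R * ‖u‖ := by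
        intro y hy
        refine ⟨(hball y hy).1, fun u => ?_⟩
        obtain ⟨ζ, h1, h2⟩ := (hsupp y (hball y hy).1 u).2
        rw [h2]
        exact (real_inner_le_norm _ _).trans
          (mul_le_mul_of_nonneg_right ((hball y hy).2 ζ h1) (norm_nonneg _))
      have hkey := aux_key hpos hcts hhom hsub hr hR hball' hx v hv (κ / 2) (by linarith)
      filter_upwards [hkey, self_mem_nhdsWithin] with ε he hε
      have hε' : 0 < ε := hε
      have hne : {L : ℝ | ∃ γ, AuxAdm γ x ∧ L = auxL ℓ γ}.Nonempty := by
        have hline : ∀ t : ℝ, HasDerivAt (fun t : ℝ => t • x) x t := fun t => by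
          simpa using (hasDerivAt_id t).smul_const x
        refine ⟨_, fun t : ℝ => t • x, ⟨?_, by simp, by simp, fun t _ => ?_⟩, rfl⟩
        · exact (contDiff_id.smul contDiff_const).contDiffOn
        · rw [(hline t).deriv]; exact hx
      obtain ⟨L, ⟨γ, hγ, rfl⟩, hL⟩ := exists_lt_of_csInf_lt hne
        (show sInf _ < dl 0 x + ε * (κ / 2) by
          rw [← hdl']
          have : 0 < ε * (κ / 2) := by positivity
          linarith)
      obtain ⟨w, σ, h1, h2, h3⟩ := he γ hγ
      refine ⟨w, h1.trans ?_, ?_⟩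
      · exact mul_le_mul_of_nonneg_right (by linarith) hε'.le
      · have := hdl_le _ σ h2
        show dl 0 (x + w) ≤ dl 0 x + ε * (ℓ x v + κ)
        linarith
    by_contra hcon
    push Not at hcon
    set v := gradient (h0 x) ξ with hvdef
    have hg := fun q => aux_grad_ineq (h0 x) (hc x) ξ q (hd x ξ)
    have hv : v ≠ 0 := by
      intro hv0
      have := hg 0
      rw [← hvdef, hv0, inner_zero_left] at this
      linarith [hz1 x]
    obtain ⟨ζ, h1, h2⟩ := (hsupp x hx v).2
    have h3 := hdir v hv
    have h4 := hg ζ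
    rw [← hvdef, inner_sub_right, real_inner_comm ζ v, real_inner_comm ξ v] at h4
    linarith
  refine ⟨main, ?_⟩
  have hpt : ∀ x : Ed d, (x ≠ 0 ∨ d = 0) →
      h0 x (gradient (fun y : Ed d => dl 0 y) x) ≤ 0 := by
    intro x hx
    by_cases hdf : DifferentiableAt ℝ (fun y : Ed d => dl 0 y) x
    · rcases hx with hx | hx
      · exact main x hx _ hdf.hasGradientAt
      · subst hx
        rw [Subsingleton.elim (gradient (fun y : Ed 0 => dl 0 y) x) 0]
        exact hz1 x
    · rw [gradient_eq_zero_of_not_differentiableAt hdf]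
      exact hz1 x
  rcases Nat.eq_zero_or_pos d with h | h
  · exact Filter.Eventually.of_forall fun x => hpt x (Or.inr h)
  · have : Nonempty (Fin d) := ⟨⟨0, h⟩⟩
    have h1 : ∀ᵐ x : Ed d ∂MeasureTheory.volume, x ≠ 0 :=
      MeasureTheory.Measure.ae_ne MeasureTheory.volume 0
    filter_upwards [h1] with x hx using hpt x (Or.inl hx)
end
end

section
/- Let ε > 0 and H_ε = T_ε + V_ε on ℓ²((εℤ)^d), where (T_ε u)(x) = Σ_{γ∈(εℤ)^d} a_γ(x,ε) u(x+γ) with real coefficients satisfying a_γ(x,ε) = a_{−γ}(x+γ,ε) for all x, γ, and for every c > 0 there is C > 0 with Σ_{γ∈(εℤ)^d} e^{2c|γ|/ε} a_γ(x,ε)² ≤ C² uniformly in x and ε; V_ε is real multiplication. Let Σ ⊂ ℝ^d, Σ_ε := Σ ∩ (εℤ)^d, and let H_ε^Σ := 1_{Σ_ε} H_ε restricted to ℓ²_{Σ_ε} (functions in ℓ²((εℤ)^d) vanishing outside Σ_ε). Let φ : Σ → ℝ be Lipschitz and constant outside some bounded set. Then for every real-valued v ∈ ℓ²_{Σ_ε}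 with V_ε v ∈ ℓ²: ⟨(e^{φ/ε} H_ε^Σ e^{−φ/ε}) v, v⟩ = ⟨(V_ε + V^φ_{ε,Σ}) v, v⟩ − (1/2) Σ_{x∈Σ_ε} Σ_{γ : x+γ∈Σ_ε} a_γ(x,ε) cosh((φ(x) − φ(x+γ))/ε) (v(x) − v(x+γ))², where V^φ_{ε,Σ}(x) := Σ_{γ : x+γ∈Σ_ε} a_γ(x,ε) cosh((φ(x) − φ(x+γ))/ε), and all the series converge absolutely. -/
open scoped RealInnerProductSpace Classical
noncomputable section

/-- The lattice point `εm ∈ (εℤ)^d` of integer coordinates `m`, as a point of `ℝ^d`. -/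
def ept (d : ℕ) (ε : ℝ) (m : Fin d → ℤ) : Ed d := ε • zv m

theorem aux_exp_int : Summable (fun n : ℤ => Real.exp (-|(n : ℝ)|)) := by
  have h : Summable (fun n : ℕ => Real.exp (-(n : ℝ))) := Real.summable_exp_neg_nat
  refine Summable.of_nat_of_neg ?_ ?_
  · simpa using h
  · simpa using h

theorem aux_exp_pi (d : ℕ) :
    Summable (fun η : Fin d → ℤ => Real.exp (-∑ i, |(η i : ℝ)|)) := by
  induction d with
  | zero => exact Summable.of_finite
  | succ n ih =>
    have h := aux_exp_int.mul_of_nonneg ih (fun _ => (Real.exp_pos _).le)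
      (fun _ => (Real.exp_pos _).le)
    rw [← (Fin.consEquiv (fun _ : Fin (n+1) => ℤ)).summable_iff]
    refine h.congr (fun p => ?_)
    rw [← Real.exp_add]
    simp [Fin.consEquiv, Fin.sum_univ_succ]
    try ring

theorem aux_coord {d : ℕ} (η : Fin d → ℤ) (i : Fin d) : |(η i : ℝ)| ≤ ‖zv η‖ := by
  have h := PiLp.norm_apply_le (zv η) i
  simpa [zv] using h

theorem aux_exp_zv (d : ℕ) :
    Summable (fun η : Fin d → ℤ => Real.exp (-(d * ‖zv η‖))) := by
  refine Summable.of_nonneg_of_le (fun _ => (Real.exp_pos _).le) (fun η => ?_) (aux_exp_pi d)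
  apply Real.exp_le_exp.2
  have : ∑ i, |(η i : ℝ)| ≤ ∑ i : Fin d, ‖zv η‖ :=
    Finset.sum_le_sum (fun i _ => aux_coord η i)
  simp at this
  linarith

theorem ept_add (d : ℕ) (ε : ℝ) (m η : Fin d → ℤ) :
    ept d ε (m + η) = ept d ε m + ε • zv η := by
  ext i
  simp [ept, zv, mul_add]

theorem aux_l2 {G : Type*} {v : G → ℝ} (h : Memℓp v 2) : Summable (fun m => v m ^ 2) := by
  have := (memℓp_gen_iff (p := 2) (by simp)).1 h
  simpa using this

/-- The involution `(m, η) ↦ (m + η, -η)`. -/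
def flipE (G : Type*) [AddCommGroup G] : G × G ≃ G × G where
  toFun p := (p.1 + p.2, -p.2)
  invFun p := (p.1 + p.2, -p.2)
  left_inv p := by ext <;> simp
  right_inv p := by ext <;> simp

theorem core {G : Type*} [AddCommGroup G] (W : G → ℝ) (hW : Summable W) (hW0 : ∀ η, 0 ≤ W η)
    (v : G → ℝ) (hv : Summable (fun m => v m ^ 2)) (g k : G × G → ℝ)
    (hg : ∀ p, |g p| ≤ W p.2) (hk : ∀ p, |k p| ≤ W p.2)
    (hks : ∀ p, k (flipE G p) = k p) (hgk : ∀ p, g p + g (flipE G p) = 2 * k p) :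
    Summable (fun p : G × G => g p * v p.1 * v (p.1 + p.2)) ∧
    Summable (fun p : G × G => k p * v p.1 ^ 2) ∧
    Summable (fun p : G × G => k p * (v p.1 - v (p.1 + p.2)) ^ 2) ∧
    ∑' p : G × G, g p * v p.1 * v (p.1 + p.2) =
      ∑' p : G × G, k p * v p.1 ^ 2
        - (1/2) * ∑' p : G × G, k p * (v p.1 - v (p.1 + p.2)) ^ 2 := by
  have hA : Summable (fun p : G × G => v p.1 ^ 2 * W p.2) :=
    hv.mul_of_nonneg hW (fun _ => sq_nonneg _) hW0
  have hB : Summable (fun p : G × G => v (p.1 + p.2) ^ 2 * W p.2) := by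
    let e : G × G ≃ G × G :=
      { toFun := fun p => (p.1 + p.2, p.2)
        invFun := fun p => (p.1 - p.2, p.2)
        left_inv := fun p => by ext <;> simp
        right_inv := fun p => by ext <;> simp }
    exact e.summable_iff.2 hA
  have hAB := hA.add hB
  have hkA : Summable (fun p : G × G => k p * v p.1 ^ 2) := by
    refine Summable.of_norm_bounded hA (fun p => ?_)
    rw [Real.norm_eq_abs, abs_mul, abs_of_nonneg (sq_nonneg (v p.1)), mul_comm]
    exact mul_le_mul_of_nonneg_left (hk p) (sq_nonneg _)
  have hkB : Summable (fun p : G × G => k p * v (p.1 + p.2) ^ 2) := by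
    refine Summable.of_norm_bounded hB (fun p => ?_)
    rw [Real.norm_eq_abs, abs_mul, abs_of_nonneg (sq_nonneg (v (p.1 + p.2))), mul_comm]
    exact mul_le_mul_of_nonneg_left (hk p) (sq_nonneg _)
  have key : ∀ f : G × G → ℝ, (∀ p, |f p| ≤ W p.2) →
      Summable (fun p : G × G => f p * v p.1 * v (p.1 + p.2)) := by
    intro f hf
    refine Summable.of_norm_bounded hAB (fun p => ?_)
    rw [Real.norm_eq_abs, mul_assoc, abs_mul]
    have h1 : |v p.1 * v (p.1 + p.2)| ≤ v p.1 ^ 2 + v (p.1 + p.2) ^ 2 := by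
      rw [abs_le]
      constructor <;> nlinarith [sq_nonneg (v p.1 + v (p.1 + p.2)),
        sq_nonneg (v p.1 - v (p.1 + p.2)), sq_nonneg (v p.1), sq_nonneg (v (p.1 + p.2))]
    calc _ ≤ W p.2 * (v p.1 ^ 2 + v (p.1 + p.2) ^ 2) :=
          mul_le_mul (hf p) h1 (abs_nonneg _) (hW0 _)
      _ = _ := by ring
  have hgS := key g hg
  have hkS := key k hk
  have hexp : (fun p : G × G => k p * (v p.1 - v (p.1 + p.2)) ^ 2) =
      fun p => (k p * v p.1 ^ 2 + k p * v (p.1 + p.2) ^ 2)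
        - 2 * (k p * v p.1 * v (p.1 + p.2)) := by
    funext p; ring
  have hgS' : Summable (fun p : G × G => g (flipE G p) * v p.1 * v (p.1 + p.2)) := by
    refine ((flipE G).summable_iff.2 hgS).congr (fun p => ?_)
    simp [flipE]; ring
  have e1 : ∑' p : G × G, g (flipE G p) * v p.1 * v (p.1 + p.2)
      = ∑' p : G × G, g p * v p.1 * v (p.1 + p.2) := by
    rw [← (flipE G).tsum_eq (fun p : G × G => g p * v p.1 * v (p.1 + p.2))]
    refine tsum_congr (fun p => ?_)
    simp [flipE]; ring
  have e2 : ∑' p : G × G, k p * v (p.1 + p.2) ^ 2 = ∑' p : G × G, k p * v p.1 ^ 2 := by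
    rw [← (flipE G).tsum_eq (fun p : G × G => k p * v p.1 ^ 2)]
    refine tsum_congr (fun p => ?_)
    rw [hks]; simp [flipE]
  have e3 : 2 * ∑' p : G × G, k p * v p.1 * v (p.1 + p.2)
      = ∑' p : G × G, g p * v p.1 * v (p.1 + p.2)
        + ∑' p : G × G, g (flipE G p) * v p.1 * v (p.1 + p.2) := by
    rw [← hgS.tsum_add hgS', ← tsum_mul_left]
    refine tsum_congr (fun p => ?_)
    linear_combination (-(v p.1 * v (p.1 + p.2))) * hgk p
  refine ⟨hgS, hkA, ?_, ?_⟩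
  · rw [hexp]; exact (hkA.add hkB).sub (hkS.mul_left 2)
  · rw [hexp, (hkA.add hkB).tsum_sub (hkS.mul_left 2), hkA.tsum_add hkB, tsum_mul_left, e3, e1, e2]
    ring

/-- Lemma 3.1 (conjugation formula): for the Dirichlet realization `H_ε^Σ` of
`H_ε = T_ε + V_ε` and a Lipschitz weight `φ` which is constant outside a bounded set,
the quadratic form of `e^{φ/ε} H_ε^Σ e^{-φ/ε}` on real `v ∈ ℓ²_{Σ_ε}` equals
`⟨(V_ε + V^φ_{ε,Σ})v, v⟩ - (1/2) Σ_{x∈Σ_ε} Σ_{γ: x+γ∈Σ_ε} a_γ(x,ε)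
cosh((φ(x)-φ(x+γ))/ε)(v(x)-v(x+γ))²`, all series converging absolutely. -/
theorem stmt16 (d : ℕ) (ε : ℝ) (hε : 0 < ε)
    (a : (Fin d → ℤ) → Ed d → ℝ)
    (hsym : ∀ (η : Fin d → ℤ) (x : Ed d), a η x = a (-η) (x + ε • zv η))
    (hdecay : ∀ c : ℝ, 0 < c → ∃ C : ℝ, 0 < C ∧ ∀ x : Ed d,
      Summable (fun η : Fin d → ℤ => Real.exp (2 * c * ‖zv η‖) * (a η x) ^ 2) ∧
      ∑' η : Fin d → ℤ, Real.exp (2 * c * ‖zv η‖) * (a η x) ^ 2 ≤ C ^ 2)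
    (V : Ed d → ℝ)
    (Sig : Set (Ed d))
    (φ : Ed d → ℝ)
    (hφlip : ∃ K : NNReal, LipschitzOnWith K φ Sig)
    (hφconst : ∃ R cst : ℝ, ∀ x ∈ Sig, R ≤ ‖x‖ → φ x = cst)
    (v : (Fin d → ℤ) → ℝ)
    (hsupp : ∀ m : Fin d → ℤ, ept d ε m ∉ Sig → v m = 0)
    (hv2 : Memℓp v 2)
    (hdom : Memℓp (fun m : Fin d → ℤ => V (ept d ε m) * v m) 2) :
    (∀ m : Fin d → ℤ, ept d ε m ∈ Sig →
      Summable (fun η : Fin d → ℤ =>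
        |if ept d ε (m + η) ∈ Sig then
            a η (ept d ε m) * Real.cosh ((φ (ept d ε m) - φ (ept d ε (m + η))) / ε)
          else 0|))
    ∧ Summable (fun p : (Fin d → ℤ) × (Fin d → ℤ) =>
        |if ept d ε p.1 ∈ Sig ∧ ept d ε (p.1 + p.2) ∈ Sig then
            a p.2 (ept d ε p.1) *
              Real.cosh ((φ (ept d ε p.1) - φ (ept d ε (p.1 + p.2))) / ε) *
              (v p.1 - v (p.1 + p.2)) ^ 2
          else 0|)
    ∧ (∀ m : Fin d → ℤ, Summable (fun η : Fin d → ℤ =>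
        |a η (ept d ε m) * Real.exp ((φ (ept d ε m) - φ (ept d ε (m + η))) / ε) *
          v (m + η)|))
    ∧ Summable (fun m : Fin d → ℤ =>
        |(if ept d ε m ∈ Sig then
            (∑' η : Fin d → ℤ,
              a η (ept d ε m) * Real.exp ((φ (ept d ε m) - φ (ept d ε (m + η))) / ε) *
                v (m + η)) + V (ept d ε m) * v m
          else 0) * v m|)
    ∧ (∑' m : Fin d → ℤ,
        (if ept d ε m ∈ Sig then
            (∑' η : Fin d → ℤ,
              a η (ept d ε m) * Real.exp ((φ (ept d ε m) - φ (ept d ε (m + η))) / ε) *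
                v (m + η)) + V (ept d ε m) * v m
          else 0) * v m)
      = (∑' m : Fin d → ℤ,
          (if ept d ε m ∈ Sig then
              (V (ept d ε m) +
                ∑' η : Fin d → ℤ,
                  if ept d ε (m + η) ∈ Sig then
                    a η (ept d ε m) *
                      Real.cosh ((φ (ept d ε m) - φ (ept d ε (m + η))) / ε)
                  else 0) * v m * v m
            else 0))
        - (1/2) * ∑' p : (Fin d → ℤ) × (Fin d → ℤ),
            (if ept d ε p.1 ∈ Sig ∧ ept d ε (p.1 + p.2) ∈ Sig then
                a p.2 (ept d ε p.1) *
                  Real.cosh ((φ (ept d ε p.1) - φ (ept d ε (p.1 + p.2))) / ε) *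
                  (v p.1 - v (p.1 + p.2)) ^ 2
              else 0) := by
  obtain ⟨K, hK⟩ := hφlip
  have hv := aux_l2 hv2
  have hVv := aux_l2 hdom
  obtain ⟨C, hC, hCx⟩ := hdecay (K + d + 1) (by positivity)
  have hlip : ∀ m η : Fin d → ℤ, ept d ε m ∈ Sig → ept d ε (m + η) ∈ Sig →
      |(φ (ept d ε m) - φ (ept d ε (m + η))) / ε| ≤ K * ‖zv η‖ := by
    intro m η h1 h2
    have h := hK.dist_le_mul _ h1 _ h2
    rw [Real.dist_eq, dist_eq_norm, ept_add, sub_add_cancel_left, norm_neg, norm_smul,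
      Real.norm_of_nonneg hε.le, ← ept_add] at h
    rw [abs_div, abs_of_pos hε, div_le_iff₀ hε]
    linarith
  have habs : ∀ (η : Fin d → ℤ) (x : Ed d),
      |a η x| ≤ C * Real.exp (-((K + d + 1) * ‖zv η‖)) := by
    intro η x
    have h1 := ((hCx x).1.le_tsum η (fun _ _ => by positivity)).trans (hCx x).2
    have h2 : (Real.exp ((K + d + 1) * ‖zv η‖) * |a η x|) ^ 2 ≤ C ^ 2 := by
      rw [mul_pow, sq_abs, ← Real.exp_nat_mul]
      refine le_trans (le_of_eq ?_) h1
      congr 2; push_cast; ring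
    have h3 := (abs_le_of_sq_le_sq' h2 hC.le).2
    rw [Real.exp_neg, ← div_eq_mul_inv, le_div_iff₀ (Real.exp_pos _)]
    linarith
  let W : (Fin d → ℤ) → ℝ := fun η => C * Real.exp (-(d * ‖zv η‖))
  have hW : Summable W := (aux_exp_zv d).mul_left C
  have hW0 : ∀ η, 0 ≤ W η := fun η => by positivity
  have hbd : ∀ (η : Fin d → ℤ) (x : Ed d) (r B : ℝ), |r| ≤ Real.exp (B + K * ‖zv η‖) →
      |a η x * r| ≤ Real.exp B * W η := by
    intro η x r B hr
    rw [abs_mul]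
    calc _ ≤ C * Real.exp (-((K + d + 1) * ‖zv η‖)) * Real.exp (B + K * ‖zv η‖) :=
          mul_le_mul (habs η x) hr (abs_nonneg _) (by positivity)
      _ = C * Real.exp (B + -(d * ‖zv η‖) + -‖zv η‖) := by
          rw [mul_assoc, ← Real.exp_add]; ring_nf
      _ ≤ C * Real.exp (B + -(d * ‖zv η‖)) := by
          refine mul_le_mul_of_nonneg_left (Real.exp_le_exp.2 ?_) hC.le
          linarith [norm_nonneg (zv η)]
      _ = _ := by simp only [W]; rw [Real.exp_add]; ring
  let E : (Fin d → ℤ) × (Fin d → ℤ) → ℝ := fun p =>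
    (φ (ept d ε p.1) - φ (ept d ε (p.1 + p.2))) / ε
  let b : (Fin d → ℤ) × (Fin d → ℤ) → Prop := fun p =>
    ept d ε p.1 ∈ Sig ∧ ept d ε (p.1 + p.2) ∈ Sig
  let g : (Fin d → ℤ) × (Fin d → ℤ) → ℝ := fun p =>
    if b p then a p.2 (ept d ε p.1) * Real.exp (E p) else 0
  let k : (Fin d → ℤ) × (Fin d → ℤ) → ℝ := fun p =>
    if b p then a p.2 (ept d ε p.1) * Real.cosh (E p) else 0
  have hg : ∀ p, |g p| ≤ W p.2 := by
    intro p
    by_cases h : b p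
    · simp only [g, if_pos h]
      refine (hbd _ _ _ 0 ?_).trans (by simp)
      rw [Real.abs_exp, zero_add]
      exact Real.exp_le_exp.2 ((le_abs_self _).trans (hlip _ _ h.1 h.2))
    · simp only [g, if_neg h, abs_zero]; exact hW0 _
  have hk : ∀ p, |k p| ≤ W p.2 := by
    intro p
    by_cases h : b p
    · simp only [k, if_pos h]
      refine (hbd _ _ _ 0 ?_).trans (by simp)
      rw [abs_of_pos (Real.cosh_pos _), zero_add]
      have h2 := abs_le.1 (hlip _ _ h.1 h.2)
      have h3 := Real.exp_le_exp.2 h2.2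
      have h4 := Real.exp_le_exp.2 (neg_le.1 h2.1)
      rw [Real.cosh_eq]
      simp only [E]
      linarith
    · simp only [k, if_neg h, abs_zero]; exact hW0 _
  have hbf : ∀ p, b (flipE _ p) ↔ b p := by
    intro p; simp only [b, flipE, Equiv.coe_fn_mk, add_neg_cancel_right]; exact and_comm
  have haf : ∀ p : (Fin d → ℤ) × (Fin d → ℤ),
      a (flipE _ p).2 (ept d ε (flipE _ p).1) = a p.2 (ept d ε p.1) := by
    intro p; simp only [flipE, Equiv.coe_fn_mk]; rw [hsym p.2, ept_add]
  have hEf : ∀ p, E (flipE _ p) = - E p := by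
    intro p; simp only [E, flipE, Equiv.coe_fn_mk, add_neg_cancel_right]; ring
  have hks : ∀ p, k (flipE _ p) = k p := by
    intro p; simp only [k, haf, hEf, hbf, Real.cosh_neg]
  have hgk : ∀ p, g p + g (flipE _ p) = 2 * k p := by
    intro p; simp only [g, k, haf, hEf, hbf]
    split_ifs
    · rw [Real.cosh_eq]; ring
    · simp
  obtain ⟨s1, s2, s3, hid⟩ := core W hW hW0 v hv g k hg hk hks hgk
  have hk3 : ∀ p : (Fin d → ℤ) × (Fin d → ℤ),
      (if ept d ε p.1 ∈ Sig ∧ ept d ε (p.1 + p.2) ∈ Sig then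
        a p.2 (ept d ε p.1) *
          Real.cosh ((φ (ept d ε p.1) - φ (ept d ε (p.1 + p.2))) / ε) *
          (v p.1 - v (p.1 + p.2)) ^ 2
        else 0) = k p * (v p.1 - v (p.1 + p.2)) ^ 2 := by
    intro p; simp only [k, b, E]; split_ifs <;> simp
  have hk1 : ∀ m : Fin d → ℤ, ept d ε m ∈ Sig → ∀ η : Fin d → ℤ,
      (if ept d ε (m + η) ∈ Sig then
        a η (ept d ε m) * Real.cosh ((φ (ept d ε m) - φ (ept d ε (m + η))) / ε)
        else 0) = k (m, η) := by
    intro m hm η; simp only [k, b, E, hm, true_and]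
  have hVs : Summable (fun m : Fin d → ℤ => V (ept d ε m) * v m * v m) := by
    refine Summable.of_norm_bounded (hVv.add hv) (fun m => ?_)
    rw [Real.norm_eq_abs, abs_le]
    constructor <;> nlinarith [sq_nonneg (V (ept d ε m) * v m + v m),
        sq_nonneg (V (ept d ε m) * v m - v m), sq_nonneg (v m),
        sq_nonneg (V (ept d ε m) * v m)]
  have hL : ∀ m : Fin d → ℤ, (if ept d ε m ∈ Sig then
            (∑' η : Fin d → ℤ,
              a η (ept d ε m) * Real.exp ((φ (ept d ε m) - φ (ept d ε (m + η))) / ε) *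
                v (m + η)) + V (ept d ε m) * v m
          else 0) * v m =
        (∑' η : Fin d → ℤ, g (m, η) * v m * v (m + η)) + V (ept d ε m) * v m * v m := by
    intro m
    by_cases hm : ept d ε m ∈ Sig
    · rw [if_pos hm, add_mul, ← tsum_mul_right]
      congr 1
      refine tsum_congr (fun η => ?_)
      by_cases h : ept d ε (m + η) ∈ Sig
      · simp only [g, b, E, hm, h, and_self, if_true]; ring
      · simp [hsupp _ h]
    · simp [hsupp m hm]
  have hR : ∀ m : Fin d → ℤ, (if ept d ε m ∈ Sig then
              (V (ept d ε m) +
                ∑' η : Fin d → ℤ,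
                  if ept d ε (m + η) ∈ Sig then
                    a η (ept d ε m) *
                      Real.cosh ((φ (ept d ε m) - φ (ept d ε (m + η))) / ε)
                  else 0) * v m * v m
            else 0) = V (ept d ε m) * v m * v m + ∑' η : Fin d → ℤ, k (m, η) * v m ^ 2 := by
    intro m
    by_cases hm : ept d ε m ∈ Sig
    · rw [if_pos hm, tsum_congr (hk1 m hm), tsum_mul_right]; ring
    · rw [if_neg hm]; simp [hsupp m hm]
  refine ⟨?_, ?_, ?_, ?_, ?_⟩
  · intro m hm
    refine Summable.of_nonneg_of_le (fun _ => abs_nonneg _) (fun η => ?_) hW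
    rw [hk1 m hm]; exact hk (m, η)
  · simp only [hk3]; exact s3.abs
  · intro m
    obtain ⟨M, hM⟩ : ∃ M, ∀ n, |v n| ≤ M := by
      refine ⟨Real.sqrt (∑' n, v n ^ 2), fun n => Real.abs_le_sqrt ?_⟩
      exact hv.le_tsum n (fun _ _ => sq_nonneg _)
    obtain ⟨B, hB⟩ : ∃ B, ∀ η : Fin d → ℤ, ept d ε (m + η) ∈ Sig →
        (φ (ept d ε m) - φ (ept d ε (m + η))) / ε ≤ B + K * ‖zv η‖ := by
      by_cases hne : ∃ η₀ : Fin d → ℤ, ept d ε (m + η₀) ∈ Sig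
      · obtain ⟨η₀, h0⟩ := hne
        refine ⟨(φ (ept d ε m) - φ (ept d ε (m + η₀))) / ε + K * ‖zv η₀‖, fun η h => ?_⟩
        have h1 := hlip (m + η₀) (η - η₀) h0 (by rwa [add_add_sub_cancel])
        rw [add_add_sub_cancel] at h1
        have h2 : ‖zv (η - η₀)‖ ≤ ‖zv η‖ + ‖zv η₀‖ := by
          have : zv (η - η₀) = zv η - zv η₀ := by ext i; simp [zv]
          rw [this]; exact norm_sub_le _ _
        have h3 := mul_le_mul_of_nonneg_left h2 K.coe_nonneg
        have h4 := (abs_le.1 h1).2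
        have h5 : (φ (ept d ε m) - φ (ept d ε (m + η))) / ε =
          (φ (ept d ε m) - φ (ept d ε (m + η₀))) / ε +
          (φ (ept d ε (m + η₀)) - φ (ept d ε (m + η))) / ε := by ring
        rw [h5]; linarith
      · push Not at hne
        exact ⟨0, fun η h => absurd h (hne η)⟩
    refine Summable.of_nonneg_of_le (fun _ => abs_nonneg _) (fun η => ?_)
      ((hW.mul_left (Real.exp B)).mul_right M)
    have hM0 : 0 ≤ M := (abs_nonneg _).trans (hM 0)
    by_cases h : ept d ε (m + η) ∈ Sig
    · rw [abs_mul]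
      refine mul_le_mul (hbd _ _ _ B ?_) (hM _) (abs_nonneg _)
        (mul_nonneg (Real.exp_pos _).le (hW0 _))
      rw [Real.abs_exp]; exact Real.exp_le_exp.2 (hB η h)
    · rw [hsupp _ h]; simp only [mul_zero, abs_zero]
      exact mul_nonneg (mul_nonneg (Real.exp_pos _).le (hW0 _)) hM0
  · simp only [hL]
    exact (s1.prod.add hVs).abs
  · simp only [hk3]
    rw [tsum_congr hL, tsum_congr hR, s1.prod.tsum_add hVs, hVs.tsum_add s2.prod,
      ← s1.tsum_prod, ← s2.tsum_prod, hid]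
    ring
end
end
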